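/- For every nonnegative integer n, b'₅(125n+21) ≡ b'₅(5n+1) (mod 5). -/

import Mathlib

/-- `b5' n` is the number of partitions of `n` into distinct parts,
none of which is divisible by `5` (with `b5' 0 = 1`). -/
def b5' (n : ℕ) : ℕ :=
  ((Nat.Partition.distincts n).filter (fun p => ∀ i ∈ p.parts, ¬ (5 ∣ i))).card

namespace B5
open PowerSeries Finset

section


section basics
variable {R : Type*} [CommRing R]

/-- Congruence of power series modulo `X ^ N`. -/
def Cg (N : ℕ) (a b : R⟦X⟧) : Prop := (X : R⟦X⟧) ^ N ∣ a - b

theorem Cg.refl (N : ℕ) (a : R⟦X⟧) : Cg N a a := by simp [Cg]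
theorem Cg.symm {N : ℕ} {a b : R⟦X⟧} (h : Cg N a b) : Cg N b a := by
  unfold Cg at *; rw [← neg_sub]; exact (dvd_neg.mpr h)
theorem Cg.trans {N : ℕ} {a b c : R⟦X⟧} (h : Cg N a b) (h' : Cg N b c) : Cg N a c := by
  unfold Cg at *; have := dvd_add h h'; simpa using this
theorem Cg.mul {N : ℕ} {a b c d : R⟦X⟧} (h : Cg N a b) (h' : Cg N c d) : Cg N (a * c) (b * d) := by
  unfold Cg at *
  have : a * c - b * d = (a - b) * c + b * (c - d) := by ring
  rw [this]; exact dvd_add (h.mul_right _) (h'.mul_left _)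
theorem Cg.sum {ι : Type*} {N : ℕ} (s : Finset ι) {a b : ι → R⟦X⟧} (h : ∀ i ∈ s, Cg N (a i) (b i)) :
    Cg N (∑ i ∈ s, a i) (∑ i ∈ s, b i) := by
  unfold Cg at *
  rw [← Finset.sum_sub_distrib]; exact Finset.dvd_sum h
theorem Cg.prod_one {ι : Type*} {N : ℕ} (s : Finset ι) {a : ι → R⟦X⟧} (h : ∀ i ∈ s, Cg N (a i) 1) :
    Cg N (∏ i ∈ s, a i) 1 := by
  classical
  induction s using Finset.induction_on with
  | empty => simpa using Cg.refl N 1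
  | insert i s hi ih =>
    rw [Finset.prod_insert hi]
    have := (h i (by simp)).mul (ih (fun j hj => h j (by simp [hj])))
    simpa using this
theorem Cg.mono {N M : ℕ} (h : M ≤ N) {a b : R⟦X⟧} (hab : Cg N a b) : Cg M a b :=
  (pow_dvd_pow _ h).trans hab
theorem Cg.coeff {N : ℕ} {a b : R⟦X⟧} (h : Cg N a b) {d : ℕ} (hd : d < N) :
    coeff d a = coeff d b := by
  have := (X_pow_dvd_iff.mp h) d hd
  rwa [map_sub, sub_eq_zero] at this
theorem Cg.of_coeff {N : ℕ} {a b : R⟦X⟧} (h : ∀ d < N, PowerSeries.coeff d a = PowerSeries.coeff d b) : Cg N a b := by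
  unfold Cg; rw [X_pow_dvd_iff]; intro d hd; rw [map_sub, h d hd, sub_self]
theorem eq_of_Cg {a b : R⟦X⟧} (h : ∀ N, Cg N a b) : a = b := by
  ext n; exact (h (n + 1)).coeff (Nat.lt_succ_self n)

/-- Infinite product of power series. -/
noncomputable def IP (g : ℕ → R⟦X⟧) : R⟦X⟧ := PowerSeries.mk fun n => coeff n (∏ i ∈ range (n + 1), g i)

/-- Convergence condition. -/
def Good (g : ℕ → R⟦X⟧) : Prop := ∀ i, Cg i (g i) 1

theorem prod_range_Cg {g : ℕ → R⟦X⟧} (hg : Good g) {N n : ℕ} (h : N ≤ n) :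
    Cg N (∏ i ∈ range n, g i) (∏ i ∈ range N, g i) := by
  obtain ⟨k, rfl⟩ := Nat.exists_eq_add_of_le h
  rw [Finset.prod_range_add]
  have : Cg N (∏ x ∈ range k, g (N + x)) 1 :=
    Cg.prod_one _ (fun i _ => (hg (N + i)).mono (by omega))
  simpa using (Cg.refl N (∏ i ∈ range N, g i)).mul this

theorem IP_Cg {g : ℕ → R⟦X⟧} (hg : Good g) {N n : ℕ} (h : N ≤ n) :
    Cg N (IP g) (∏ i ∈ range n, g i) := by
  apply Cg.of_coeff
  intro d hd
  rw [IP, coeff_mk]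
  exact ((prod_range_Cg hg (show d + 1 ≤ n by omega)).coeff (Nat.lt_succ_self d)).symm

theorem Good.mul {g h : ℕ → R⟦X⟧} (hg : Good g) (hh : Good h) : Good (fun i => g i * h i) :=
  fun i => by simpa using (hg i).mul (hh i)

theorem IP_mul {g h : ℕ → R⟦X⟧} (hg : Good g) (hh : Good h) :
    IP g * IP h = IP (fun i => g i * h i) := by
  apply eq_of_Cg; intro N
  refine ((IP_Cg hg le_rfl).mul (IP_Cg hh le_rfl)).trans ?_
  rw [← Finset.prod_mul_distrib]
  exact (IP_Cg (hg.mul hh) le_rfl).symm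

theorem Good.pow {g : ℕ → R⟦X⟧} (hg : Good g) (k : ℕ) : Good (fun i => g i ^ k) := by
  induction k with
  | zero => intro i; simpa using Cg.refl i 1
  | succ k ih => simpa [pow_succ] using ih.mul hg

theorem IP_one : IP (fun _ => (1 : R⟦X⟧)) = 1 := by
  ext n; simp [IP]

theorem IP_pow {g : ℕ → R⟦X⟧} (hg : Good g) (k : ℕ) : IP g ^ k = IP (fun i => g i ^ k) := by
  induction k with
  | zero => simp [IP_one]
  | succ k ih => simp only [pow_succ]; rw [ih, IP_mul (hg.pow k) hg]

theorem Good.sub {g : ℕ → R⟦X⟧} (hg : Good g) {m : ℕ} (hm : 0 < m) (r : ℕ) :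
    Good (fun i => g (m * i + r)) := fun i => (hg (m * i + r)).mono (by nlinarith)

theorem prod_range_mul' (g : ℕ → R⟦X⟧) (m n : ℕ) :
    ∏ i ∈ range (m * n), g i = ∏ r ∈ range m, ∏ i ∈ range n, g (m * i + r) := by
  rw [Finset.prod_comm]
  induction n with
  | zero => simp
  | succ n ih => rw [Nat.mul_succ, Finset.prod_range_add, ih, Finset.prod_range_succ]

theorem IP_split {g : ℕ → R⟦X⟧} (hg : Good g) {m : ℕ} (hm : 0 < m) :
    IP g = ∏ r ∈ range m, IP (fun i => g (m * i + r)) := by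
  apply eq_of_Cg; intro N
  refine (IP_Cg hg (n := m * N) (by nlinarith)).trans ?_
  rw [prod_range_mul']
  have : ∀ s : Finset ℕ, Cg N (∏ r ∈ s, ∏ i ∈ range N, g (m * i + r))
      (∏ r ∈ s, IP (fun i => g (m * i + r))) := by
    intro s
    induction s using Finset.induction_on with
    | empty => simpa using Cg.refl N 1
    | insert i s hi ih =>
      rw [Finset.prod_insert hi, Finset.prod_insert hi]
      exact (IP_Cg (hg.sub hm i) le_rfl).symm.mul ih
  exact this _

theorem IP_shift {g : ℕ → R⟦X⟧} (hg : Good g) (hg' : Good (fun i => g (i+1))) :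
    IP g = g 0 * IP (fun i => g (i + 1)) := by
  apply eq_of_Cg; intro N
  refine (IP_Cg hg (n := N + 1) (by omega)).trans ?_
  rw [Finset.prod_range_succ', mul_comm]
  exact (Cg.refl _ _).mul (IP_Cg hg' le_rfl).symm

/-- Series indexed by an arbitrary type: `∑ c i X ^ e i`. -/
noncomputable def Th {ι : Type*} (e : ι → ℕ) (c : ι → R) : R⟦X⟧ :=
  PowerSeries.mk fun n => ∑ᶠ i ∈ {i | e i = n}, c i

/-- finiteness of the fibres. -/
def FinE {ι : Type*} (e : ι → ℕ) : Prop := ∀ N, {i | e i < N}.Finite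

theorem FinE.eq {ι : Type*} {e : ι → ℕ} (h : FinE e) (n : ℕ) : {i | e i = n}.Finite :=
  (h (n + 1)).subset (fun i hi => by simp only [Set.mem_ofPred_eq] at *; omega)

theorem coeff_Th {ι : Type*} (e : ι → ℕ) (c : ι → R) (n : ℕ) :
    coeff n (Th e c) = ∑ᶠ i ∈ {i | e i = n}, c i := by rw [Th, coeff_mk]

theorem Th_Cg {ι : Type*} {e : ι → ℕ} (c : ι → R) (N : ℕ) (s : Finset ι)
    (hs : ∀ i, e i < N → i ∈ s) : Cg N (Th e c) (∑ i ∈ s, C (c i) * X ^ e i) := by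
  classical
  apply Cg.of_coeff
  intro d hd
  rw [coeff_Th, map_sum]
  have h1 : {i | e i = d} = ((s.filter (fun i => e i = d) : Finset ι) : Set ι) := by
    ext i; simp only [Set.mem_ofPred_eq, coe_filter]
    exact ⟨fun h => ⟨hs i (by omega), h⟩, fun h => h.2⟩
  rw [h1, finsum_mem_coe_finset, Finset.sum_filter]
  apply Finset.sum_congr rfl
  intro i _
  rw [coeff_C_mul, coeff_X_pow]
  by_cases h : e i = d
  · simp [h]
  · simp [h, Ne.symm h]

theorem Th_mul {ι κ : Type*} {e : ι → ℕ} {e' : κ → ℕ} (he : FinE e) (he' : FinE e') (c : ι → R)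
    (c' : κ → R) : Th e c * Th e' c' =
      Th (fun p : ι × κ => e p.1 + e' p.2) (fun p => c p.1 * c' p.2) := by
  apply eq_of_Cg; intro N
  refine ((Th_Cg c N (he N).toFinset (by simp)).mul (Th_Cg c' N (he' N).toFinset (by simp))).trans ?_
  refine Cg.trans ?_ (Th_Cg _ N ((he N).toFinset ×ˢ (he' N).toFinset) ?_).symm
  · rw [Finset.sum_mul_sum, Finset.sum_product]
    have : ∀ a b : R⟦X⟧, a = b → Cg N a b := fun a b h => h ▸ Cg.refl _ _
    apply this
    apply Finset.sum_congr rfl; intro i _; apply Finset.sum_congr rfl; intro j _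
    simp only [map_mul, pow_add]; ring
  · rintro ⟨i, j⟩ h
    simp at *; omega

theorem FinE.prod {ι κ : Type*} {e : ι → ℕ} {e' : κ → ℕ} (he : FinE e) (he' : FinE e') :
    FinE (fun p : ι × κ => e p.1 + e' p.2) := by
  intro N
  refine ((he N).prod (he' N)).subset ?_
  rintro ⟨i, j⟩ h
  simp at *; omega

theorem Th_equiv {ι κ : Type*} (f : κ ≃ ι) (e : ι → ℕ) (c : ι → R) :
    Th e c = Th (e ∘ f) (c ∘ f) := by
  ext n
  rw [coeff_Th, coeff_Th]
  symm
  apply finsum_mem_eq_of_bijOn f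
  · refine ⟨fun i hi => hi, f.injective.injOn, fun i hi => ⟨f.symm i, by simpa using hi, by simp⟩⟩
  · intro x _; rfl

theorem Th_add {ι : Type*} {e : ι → ℕ} (he : FinE e) (c c' : ι → R) :
    Th e c + Th e c' = Th e (fun i => c i + c' i) := by
  ext n
  rw [map_add, coeff_Th, coeff_Th, coeff_Th, finsum_mem_add_distrib (he.eq n)]

theorem Th_smul {ι : Type*} {e : ι → ℕ} (he : FinE e) (a : R) (c : ι → R) :
    C a * Th e c = Th e (fun i => a * c i) := by
  ext n
  rw [coeff_C_mul, coeff_Th, coeff_Th, finsum_mem_eq_finite_toFinset_sum _ (he.eq n),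
    finsum_mem_eq_finite_toFinset_sum _ (he.eq n), Finset.mul_sum]

theorem Th_X {ι : Type*} {e : ι → ℕ} (c : ι → R) (k : ℕ) :
    X ^ k * Th e c = Th (fun i => k + e i) c := by
  ext n
  rw [coeff_X_pow_mul', coeff_Th, coeff_Th]
  split_ifs with h
  · have : {i | e i = n - k} = {i | k + e i = n} := by
      ext i; simp only [Set.mem_ofPred_eq]; omega
    rw [this]
  · have : {i | k + e i = n} = ∅ := by
      ext i
      simp only [Set.mem_ofPred_eq, Set.mem_empty_iff_false, iff_false]
      omega
    rw [this, finsum_mem_empty]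

theorem Th_sum {ι κ : Type*} [Fintype κ] {e : ι × κ → ℕ} (he : FinE e) (c : ι × κ → R) :
    Th e c = ∑ r : κ, Th (fun i => e (i, r)) (fun i => c (i, r)) := by
  classical
  apply eq_of_Cg; intro N
  let S : Finset ι := (he N).toFinset.image Prod.fst
  refine (Th_Cg c N (S ×ˢ Finset.univ) ?_).trans ?_
  · rintro ⟨i, r⟩ h
    simp only [mem_product, Finset.mem_univ, and_true, S, Finset.mem_image, Set.Finite.mem_toFinset, Set.mem_ofPred_eq]
    exact ⟨(i, r), h, rfl⟩
  rw [Finset.sum_product_right]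
  apply Cg.sum
  intro r _
  apply Cg.symm
  apply Th_Cg
  intro i h
  simp only [S, Finset.mem_image, Set.Finite.mem_toFinset, Set.mem_ofPred_eq]
  exact ⟨(i, r), h, rfl⟩

theorem FinE.comp {ι κ : Type*} {e : ι → ℕ} (he : FinE e) {f : κ → ι} (hf : Function.Injective f) :
    FinE (e ∘ f) := fun N => (he N).preimage hf.injOn

theorem Th_mod5 {e : ℤ → ℕ} (he : FinE e) (c : ℤ → R) :
    Th e c = Th (fun j => e (5 * j)) (fun j => c (5 * j))
      + Th (fun j => e (5 * j + 1)) (fun j => c (5 * j + 1))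
      + Th (fun j => e (5 * j + 2)) (fun j => c (5 * j + 2))
      + Th (fun j => e (5 * j + 3)) (fun j => c (5 * j + 3))
      + Th (fun j => e (5 * j + 4)) (fun j => c (5 * j + 4)) := by
  rw [Th_equiv (Int.divModEquiv 5).symm e c, Th_sum (he.comp (Equiv.injective _))]
  simp only [Fin.sum_univ_five, Function.comp, Int.divModEquiv_symm_apply]
  simp [mul_comm]

end basics

end

section


section triple
variable {R : Type*} [CommRing R]

/-- Triangular numbers. -/
def t (k : ℤ) : ℕ := (k * (k + 1) / 2).toNat

theorem two_t (k : ℤ) : (2 * (t k : ℤ)) = k * (k + 1) := by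
  have h : (2 : ℤ) ∣ k * (k + 1) := (Int.even_mul_succ_self k).two_dvd
  have h0 : 0 ≤ k * (k + 1) := by
    rcases le_or_gt 0 k with h | h
    · positivity
    · nlinarith
  unfold t
  rw [Int.toNat_of_nonneg (by omega)]
  omega

/-- sign `(-1)^k`. -/
def sg (R : Type*) [CommRing R] (k : ℤ) : R := ((k.negOnePow : ℤ) : R)

theorem sg_succ (k : ℤ) : sg R (k + 1) = - sg R k := by
  simp [sg, Int.negOnePow_succ]
theorem sg_zero : sg R 0 = 1 := by simp [sg]
theorem sg_add (k l : ℤ) : sg R (k + l) = sg R k * sg R l := by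
  simp [sg, Int.negOnePow_add]
theorem sg_neg (k : ℤ) : sg R (-k) = sg R k := by
  simp [sg, Int.negOnePow_neg]
theorem sg_two_mul (k : ℤ) : sg R (2 * k) = 1 := by
  simp [sg, Int.negOnePow_two_mul]

/-- Gaussian binomial coefficients. -/
def gb (p : R) : ℕ → ℕ → R
  | _, 0 => 1
  | 0, _ + 1 => 0
  | n + 1, j + 1 => gb p n j + p ^ (j + 1) * gb p n (j + 1)

theorem gb_zero (p : R) (n : ℕ) : gb p n 0 = 1 := by cases n <;> rfl
theorem gb_succ (p : R) (n j : ℕ) :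
    gb p (n + 1) (j + 1) = gb p n j + p ^ (j + 1) * gb p n (j + 1) := rfl
theorem gb_gt (p : R) (n j : ℕ) (h : n < j) : gb p n j = 0 := by
  induction n generalizing j with
  | zero => obtain ⟨j, rfl⟩ := Nat.exists_eq_succ_of_ne_zero (by omega : j ≠ 0); rfl
  | succ n ih =>
    obtain ⟨j, rfl⟩ := Nat.exists_eq_succ_of_ne_zero (by omega : j ≠ 0)
    rw [Nat.succ_eq_add_one, gb_succ, ih _ (by omega), ih _ (by omega)]; simp

theorem gb_self (p : R) (n : ℕ) : gb p n n = 1 := by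
  induction n with
  | zero => rfl
  | succ n ih => rw [gb_succ, ih, gb_gt _ _ _ (by omega)]; simp

theorem gb_H (p : R) (n j : ℕ) (h : j ≤ n) :
    (1 - p ^ (n - j)) * gb p n j = (1 - p ^ (j + 1)) * gb p n (j + 1) := by
  induction n generalizing j with
  | zero =>
    obtain rfl : j = 0 := by omega
    simp [gb]
  | succ n ih =>
    rcases Nat.lt_or_ge n j with h1 | h1
    · obtain rfl : j = n + 1 := by omega
      rw [gb_gt p (n+1) (n + 1 + 1) (by omega)]; simp
    · cases j with
      | zero =>
        rw [gb_zero, gb_succ, gb_zero]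
        have := ih 0 (by omega)
        rw [gb_zero] at this
        simp only [Nat.sub_zero, zero_add, mul_one] at this ⊢
        linear_combination p * this
      | succ j =>
        have a1 := ih j (by omega)
        have a2 := ih (j + 1) h1
        obtain ⟨d, rfl⟩ := Nat.exists_eq_add_of_le h1
        have e1 : j + 1 + d - j = d + 1 := by omega
        have e2 : j + 1 + d - (j + 1) = d := by omega
        have e3 : j + 1 + d + 1 - (j + 1) = d + 1 := by omega
        rw [e1] at a1; rw [e2] at a2; rw [e3, gb_succ, gb_succ]
        linear_combination a1 + p ^ (j + 1 + 1) * a2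

theorem gb_succ' (p : R) (n j : ℕ) (h : j ≤ n) :
    gb p (n + 1) (j + 1) = p ^ (n - j) * gb p n j + gb p n (j + 1) := by
  rw [gb_succ]; linear_combination gb_H p n j h

theorem gb_prod (p : R) (i j : ℕ) : gb p (i + j) i * (∏ k ∈ range i, (1 - p ^ (k + 1)))
    * (∏ k ∈ range j, (1 - p ^ (k + 1))) = ∏ k ∈ range (i + j), (1 - p ^ (k + 1)) := by
  induction i generalizing j with
  | zero => simp [gb_zero]
  | succ i ih =>
    induction j with
    | zero => simp [gb_self]
    | succ j jh =>
      have h1 := ih (j + 1)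
      rw [show i + 1 + (j + 1) = i + (j + 1) + 1 by ring, gb_succ, Finset.prod_range_succ _ i,
        Finset.prod_range_succ _ (i + (j + 1))]
      rw [show i + 1 + j = i + (j + 1) by ring, Finset.prod_range_succ _ i] at jh
      rw [Finset.prod_range_succ _ j] at h1 ⊢
      linear_combination (1 - p ^ (i + 1)) * h1 + p ^ (i + 1) * (1 - p ^ (j + 1)) * jh

theorem gb_sum1 (p : R) (N : ℕ) (τ : ℕ → R) : ∑ j ∈ range (N + 2), gb p (N + 1) j * τ j
    = ∑ j ∈ range (N + 1), gb p N j * (τ (j + 1) + p ^ j * τ j) := by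
  rw [Finset.sum_range_succ']
  have : ∑ j ∈ range (N + 1), gb p N j * (τ (j + 1) + p ^ j * τ j) =
      ∑ j ∈ range (N + 1), gb p N j * τ (j + 1) + ∑ j ∈ range (N + 2), gb p N j * (p ^ j * τ j) := by
    rw [Finset.sum_range_succ _ (N + 1), gb_gt p N (N + 1) (by omega), zero_mul, add_zero,
      ← Finset.sum_add_distrib]
    exact Finset.sum_congr rfl (fun j _ => by ring)
  rw [this, Finset.sum_range_succ' _ (N + 1), ← add_assoc, ← Finset.sum_add_distrib]
  simp only [gb_succ, gb_zero, pow_zero, one_mul]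
  congr 1
  exact Finset.sum_congr rfl (fun j _ => by ring)

theorem gb_sum2 (p : R) (N : ℕ) (τ : ℕ → R) : ∑ j ∈ range (N + 2), gb p (N + 1) j * τ j
    = ∑ j ∈ range (N + 1), gb p N j * (p ^ (N - j) * τ (j + 1) + τ j) := by
  rw [Finset.sum_range_succ']
  have : ∑ j ∈ range (N + 1), gb p N j * (p ^ (N - j) * τ (j + 1) + τ j) =
      ∑ j ∈ range (N + 1), gb p N j * (p ^ (N - j) * τ (j + 1)) + ∑ j ∈ range (N + 2), gb p N j * τ j := by
    rw [Finset.sum_range_succ _ (N + 1), gb_gt p N (N + 1) (by omega), zero_mul, add_zero,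
      ← Finset.sum_add_distrib]
    exact Finset.sum_congr rfl (fun j _ => by ring)
  rw [this, Finset.sum_range_succ' _ (N + 1), ← add_assoc, ← Finset.sum_add_distrib]
  simp only [gb_zero, one_mul]
  congr 1
  apply Finset.sum_congr rfl
  intro j hj
  rw [gb_succ' p N j (by simp at hj; omega)]; ring

/-- The terms of the triple product sum. -/
def term (z w : R) (k : ℤ) : R := sg R k * (z ^ t k * w ^ t (-k))

theorem term_z (z w : R) (k : ℤ) (r d : ℕ) (h : (d : ℤ) = r - k) :
    -(z * (z * w) ^ r) * term z w k = (z * w) ^ d * term z w (k + 1) := by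
  have h1 := two_t k
  have h2 := two_t (-k)
  have h3 := two_t (k + 1)
  have h4 := two_t (-(k + 1))
  have e1 : 1 + r + t k = d + t (k + 1) := by
    have : (2 * (1 + r + t k) : ℤ) = 2 * (d + t (k + 1)) := by linarith
    omega
  have e2 : r + t (-k) = d + t (-(k + 1)) := by
    have : (2 * (r + t (-k)) : ℤ) = 2 * (d + t (-(k + 1))) := by linarith
    omega
  unfold term
  rw [sg_succ]
  calc _ = -sg R k * (z ^ (1 + r + t k) * w ^ (r + t (-k))) := by ring
    _ = _ := by rw [e1, e2]; ring

theorem term_w (z w : R) (k : ℤ) (s d : ℕ) (h : (d : ℤ) = s + k) :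
    -(w * (z * w) ^ s) * term z w k = (z * w) ^ d * term z w (k - 1) := by
  have h1 := two_t k
  have h2 := two_t (-k)
  have h3 := two_t (k - 1)
  have h4 := two_t (-(k - 1))
  have e1 : s + t k = d + t (k - 1) := by
    have : (2 * (s + t k) : ℤ) = 2 * (d + t (k - 1)) := by linarith
    omega
  have e2 : 1 + s + t (-k) = d + t (-(k - 1)) := by
    have : (2 * (1 + s + t (-k)) : ℤ) = 2 * (d + t (-(k - 1))) := by linarith
    omega
  have h5 := sg_succ (R := R) (k - 1)
  rw [sub_add_cancel] at h5
  unfold term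
  rw [h5]
  calc _ = sg R (k - 1) * (z ^ (s + t k) * w ^ (1 + s + t (-k))) := by ring
    _ = _ := by rw [e1, e2]; ring

theorem fin_triple (z w : R) (r s : ℕ) :
    (∏ i ∈ range r, (1 - z * (z * w) ^ i)) * (∏ i ∈ range s, (1 - w * (z * w) ^ i))
      = ∑ j ∈ range (r + s + 1), gb (z * w) (r + s) j * term z w ((j : ℤ) - s) := by
  induction r with
  | zero =>
    induction s with
    | zero => simp [gb, term, sg_zero, t]
    | succ s ih =>
      simp only [range_zero, prod_empty, one_mul, zero_add] at *
      rw [Finset.prod_range_succ, ih, gb_sum1, Finset.sum_mul]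
      apply Finset.sum_congr rfl
      intro j hj
      have := term_w z w ((j : ℤ) - s) s j (by ring)
      push_cast
      rw [show (j : ℤ) + 1 - (s + 1) = j - s by ring, show (j : ℤ) - (s + 1) = j - s - 1 by ring]
      linear_combination gb (z * w) s j * this
  | succ r ih =>
    rw [Finset.prod_range_succ, mul_right_comm, ih, show r + 1 + s = r + s + 1 by ring, gb_sum2,
      Finset.sum_mul]
    apply Finset.sum_congr rfl
    intro j hj
    have := term_z z w ((j : ℤ) - s) r (r + s - j) (by simp at hj; omega)
    push_cast
    rw [show (j : ℤ) + 1 - s = j - s + 1 by ring]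
    linear_combination gb (z * w) (r + s) j * this

end triple

end

section


section triple2
variable {R : Type*} [CommRing R]

/-- exponents in the triple product -/
def ex (a b : ℕ) (k : ℤ) : ℕ := a * t k + b * t (-k)

theorem natAbs_le_t (k : ℤ) : k.natAbs ≤ t k + 1 := by
  have h := two_t k
  rcases le_or_gt 0 k with h0 | h0
  · have : (k.natAbs : ℤ) = k := by omega
    zify; rw [abs_of_nonneg h0]
    nlinarith [mul_nonneg h0 h0, two_t k, (by positivity : (0 : ℤ) ≤ t k)]
  · zify; rw [abs_of_neg h0]
    nlinarith [mul_nonneg (show 0 ≤ -k - 1 by omega) (show 0 ≤ -k - 1 by omega)]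

theorem natAbs_le_ex {a b : ℕ} (h : 0 < a + b) (k : ℤ) : k.natAbs ≤ ex a b k + 1 := by
  unfold ex
  rcases Nat.eq_zero_or_pos a with rfl | ha
  · have := natAbs_le_t (-k)
    rw [Int.natAbs_neg] at this
    nlinarith
  · have := natAbs_le_t k
    nlinarith [Nat.zero_le (b * t (-k))]

theorem finE_ex {a b : ℕ} (h : 0 < a + b) : FinE (ex a b) := by
  intro N
  refine (Set.finite_Icc (-(N : ℤ)) N).subset ?_
  intro k hk
  have := natAbs_le_ex h k
  simp only [Set.mem_ofPred_eq, Set.mem_Icc] at *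
  omega

theorem good_factor (c : R) (a : ℕ) {m : ℕ} (hm : 0 < m) :
    Good (fun i => 1 - C c * X ^ (a + m * i)) := by
  intro i
  unfold Cg
  have : 1 - C c * X ^ (a + m * i) - 1 = X ^ i * (- (C c * X ^ (a + m * i - i)) : R⟦X⟧) := by
    have : a + m * i = i + (a + m * i - i) := by
      have : i ≤ m * i := Nat.le_mul_of_pos_left i hm
      omega
    conv_lhs => rw [this, pow_add]
    ring
  rw [this]; exact dvd_mul_right _ _

theorem good_factor' (a : ℕ) {m : ℕ} (hm : 0 < m) :
    Good (fun i => (1 : R⟦X⟧) - X ^ (a + m * i)) := by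
  have := good_factor (1 : R) a hm
  simpa using this

theorem isUnit_IP {g : ℕ → R⟦X⟧} (hg : Good g) (h0 : constantCoeff (g 0) = 1) : IsUnit (IP g) := by
  rw [isUnit_iff_constantCoeff, ← coeff_zero_eq_constantCoeff_apply]
  have := (IP_Cg hg (le_refl 1)).coeff (d := 0) (by omega)
  rw [this]; simp [h0]

theorem triple (l μ : R) (hl : l * μ = 1) (a b : ℕ) (hab : 0 < a + b) :
    IP (fun i => 1 - C l * X ^ (a + (a + b) * i)) * IP (fun i => 1 - C μ * X ^ (b + (a + b) * i))
      * IP (fun i => 1 - X ^ ((a + b) + (a + b) * i))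
      = Th (ex a b) (fun k => sg R k * (l ^ t k * μ ^ t (-k))) := by
  set F : R⟦X⟧ := IP (fun i => 1 - X ^ ((a + b) + (a + b) * i)) with hF
  set z : R⟦X⟧ := C l * X ^ a with hz
  set w : R⟦X⟧ := C μ * X ^ b with hw
  have hp : z * w = X ^ (a + b) := by
    rw [hz, hw, pow_add]
    have : (C l * C μ : R⟦X⟧) = 1 := by rw [← map_mul, hl, map_one]
    linear_combination X ^ a * X ^ b * this
  have gF : Good (fun i => (1 : R⟦X⟧) - X ^ ((a + b) + (a + b) * i)) := good_factor' _ hab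
  have hterm : ∀ k : ℤ, term z w k = C (sg R k * (l ^ t k * μ ^ t (-k))) * X ^ ex a b k := by
    intro k
    have hsg : sg R⟦X⟧ k = C (sg R k) := by unfold sg; simp
    unfold term ex
    rw [hsg, hz, hw]
    simp only [map_mul, map_pow, mul_pow, pow_add, pow_mul]
    ring
  obtain ⟨G, hG⟩ := (isUnit_IP gF (by simp [zero_pow hab.ne'])).exists_right_inv
  apply eq_of_Cg; intro N
  set n := 2 * N + 2 with hn
  have hP : ∀ j, N ≤ j → Cg N F (∏ k ∈ range j, (1 - (z * w) ^ (k + 1))) := by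
    intro j hj
    have := IP_Cg gF hj
    refine this.trans ?_
    have h : ∀ k, (1 : R⟦X⟧) - X ^ ((a + b) + (a + b) * k) = 1 - (z * w) ^ (k + 1) := by
      intro k; rw [hp, ← pow_mul]; congr 2; ring
    simp only [h]; exact Cg.refl _ _
  refine (((IP_Cg (good_factor l a hab) (show N ≤ n by omega)).mul
    (IP_Cg (good_factor μ b hab) (show N ≤ n by omega))).mul (Cg.refl N F)).trans ?_
  have e1 : ∀ i, (1 : R⟦X⟧) - C l * X ^ (a + (a + b) * i) = 1 - z * (z * w) ^ i := by
    intro i; rw [hp, hz, ← pow_mul, pow_add]; ring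
  have e2 : ∀ i, (1 : R⟦X⟧) - C μ * X ^ (b + (a + b) * i) = 1 - w * (z * w) ^ i := by
    intro i; rw [hp, hw, ← pow_mul, pow_add]; ring
  simp only [e1, e2]
  rw [fin_triple, Finset.sum_mul]
  have step : Cg N (∑ j ∈ range (n + n + 1), gb (z * w) (n + n) j * term z w ((j : ℤ) - n) * F)
      (∑ j ∈ range (n + n + 1), term z w ((j : ℤ) - n)) := by
    apply Cg.sum
    intro j hj
    simp only [Finset.mem_range] at hj
    rcases Nat.lt_or_ge (ex a b ((j : ℤ) - n)) N with h | h
    · have h1 := natAbs_le_ex hab ((j : ℤ) - n)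
      have hj1 : N ≤ j := by omega
      obtain ⟨i, hi⟩ : ∃ i, n + n = j + i := ⟨n + n - j, by omega⟩
      have hi1 : N ≤ i := by omega
      have h2 := gb_prod (z * w) j i
      rw [← hi] at h2
      have h3 : Cg N (gb (z * w) (n + n) j * F * F) F := by
        refine (((Cg.refl N (gb (z * w) (n + n) j)).mul (hP j hj1)).mul (hP i hi1)).trans ?_
        rw [h2]
        exact (hP _ (by omega)).symm
      have h4 := (h3.mul (Cg.refl N G)).mul (Cg.refl N (term z w ((j : ℤ) - n)))
      rw [mul_assoc _ F G, hG, one_mul, mul_one] at h4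
      have h5 : gb (z * w) (n + n) j * term z w ((j : ℤ) - n) * F =
        gb (z * w) (n + n) j * F * term z w ((j : ℤ) - n) := by ring
      rw [h5]; exact h4
    · have hd : X ^ N ∣ term z w ((j : ℤ) - n) := by
        rw [hterm]; exact (pow_dvd_pow _ h).mul_left _
      exact dvd_sub ((hd.mul_left _).mul_right _) hd
  refine step.trans ?_
  apply Cg.symm
  have h6 := Th_Cg (e := ex a b) (fun k => sg R k * (l ^ t k * μ ^ t (-k))) N
    ((range (n + n + 1)).image (fun j : ℕ => (j : ℤ) - n)) ?_
  · refine h6.trans ?_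
    rw [Finset.sum_image (by intro x _ y _ h; simpa using h)]
    simp only [hterm]; exact Cg.refl _ _
  · intro k hk
    have h1 := natAbs_le_ex hab k
    simp only [Finset.mem_image, Finset.mem_range]
    exact ⟨(k + n).toNat, by omega, by omega⟩

end triple2

end

section


/-- the coefficient field -/
abbrev K := ZMod 5

instance : Fact (Nat.Prime 5) := ⟨by norm_num⟩

instance : CharP K⟦X⟧ 5 := charP_of_injective_ringHom (f := C) C_injective 5

/-- `∏ (1 - q^(a + m i))` -/
noncomputable def pr (a m : ℕ) : K⟦X⟧ := IP (fun i => 1 - X ^ (a + m * i))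

/-- theta series -/
noncomputable def th (a b : ℕ) : K⟦X⟧ := Th (ex a b) (sg K)

theorem triple' (a b : ℕ) (hab : 0 < a + b) :
    pr a (a + b) * pr b (a + b) * pr (a + b) (a + b) = th a b := by
  have := triple (1 : K) 1 (by simp) a b hab
  simpa [pr, th] using this

theorem pr_split (a m c : ℕ) (hm : 0 < m) (hc : 0 < c) :
    pr a m = ∏ r ∈ range c, pr (a + m * r) (c * m) := by
  unfold pr
  rw [IP_split (good_factor' a hm) hc]
  apply Finset.prod_congr rfl
  intro r _
  congr 1; funext i; congr 2; ring

theorem pr_pow5 (a m : ℕ) (hm : 0 < m) : pr a m ^ 5 = pr (5 * a) (5 * m) := by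
  unfold pr
  rw [IP_pow (good_factor' a hm)]
  congr 1; funext i
  rw [sub_pow_char, one_pow, ← pow_mul]
  congr 2; ring

theorem IP_congr_mul {R : Type*} [CommRing R] {g h : ℕ → R⟦X⟧} (hg : Good g) (hh : Good h) (c : R⟦X⟧)
    (H : ∀ i, c * g i = c * h i) : c * IP g = c * IP h := by
  apply eq_of_Cg; intro N
  refine ((Cg.refl N c).mul (IP_Cg hg le_rfl)).trans (Cg.trans ?_ ((Cg.refl N c).mul (IP_Cg hh le_rfl)).symm)
  have : ∀ n, c * ∏ i ∈ range n, g i = c * ∏ i ∈ range n, h i := by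
    intro n
    induction n with
    | zero => simp
    | succ n ih =>
      rw [Finset.prod_range_succ, Finset.prod_range_succ, ← mul_assoc, ih]
      linear_combination (∏ i ∈ range n, h i) * H n
  rw [this]; exact Cg.refl _ _

theorem map_IP {R S : Type*} [CommRing R] [CommRing S] (f : R →+* S) (g : ℕ → R⟦X⟧) :
    PowerSeries.map f (IP g) = IP (fun i => PowerSeries.map f (g i)) := by
  ext n
  rw [coeff_map, IP, IP, coeff_mk, coeff_mk, ← map_prod, coeff_map]

open DualNumber in
theorem eps_pow_add (n : ℕ) : ((1 : DualNumber K) + ε) ^ n = 1 + (n : DualNumber K) * ε := by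
  induction n with
  | zero => simp
  | succ n ih =>
    rw [pow_succ, ih]; push_cast
    linear_combination (n : DualNumber K) * DualNumber.eps_mul_eps (R := K)

open DualNumber in
theorem eps_pow_sub (n : ℕ) : ((1 : DualNumber K) - ε) ^ n = 1 - (n : DualNumber K) * ε := by
  induction n with
  | zero => simp
  | succ n ih =>
    rw [pow_succ, ih]; push_cast
    linear_combination (n : DualNumber K) * DualNumber.eps_mul_eps (R := K)

open DualNumber in
theorem jacobi (m : ℕ) (hm : 0 < m) :
    pr m m ^ 3 = Th (ex m 0) (fun k => sg K k * (k : K)) := by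
  have hee := DualNumber.eps_mul_eps (R := K)
  have H := triple (1 - ε : DualNumber K) (1 + ε) (by linear_combination - hee) m 0 (by omega)
  simp only [add_zero] at H
  have g1 := good_factor (1 - ε : DualNumber K) m hm
  have g2 := good_factor (1 + ε : DualNumber K) m hm
  have g3 := good_factor' (R := DualNumber K) m hm
  have hce : (C ε * C ε : (DualNumber K)⟦X⟧) = 0 := by rw [← map_mul, hee, map_zero]
  have h2 : IP (fun i => 1 - C (1 + ε : DualNumber K) * X ^ (0 + m * i)) =
      - C ε * IP (fun i => 1 - C (1 + ε : DualNumber K) * X ^ (m + m * i)) := by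
    have hg : (fun i => (1 - C (1 + ε : DualNumber K) * X ^ (0 + m * (i + 1)) : (DualNumber K)⟦X⟧)) =
      (fun i => 1 - C (1 + ε : DualNumber K) * X ^ (m + m * i)) := by
      funext i; congr 3; ring
    rw [IP_shift (good_factor _ 0 hm) (by rw [hg]; exact g2), hg]
    simp
  have h3 : C ε * IP (fun i => 1 - C (1 + ε : DualNumber K) * X ^ (m + m * i)) =
      C ε * IP (fun i => 1 - X ^ (m + m * i)) := by
    apply IP_congr_mul g2 g3
    intro i; rw [map_add, map_one]; linear_combination - X ^ (m + m * i) * hce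
  have h1 : C ε * IP (fun i => 1 - C (1 - ε : DualNumber K) * X ^ (m + m * i)) =
      C ε * IP (fun i => 1 - X ^ (m + m * i)) := by
    apply IP_congr_mul g1 g3
    intro i; rw [map_sub, map_one]; linear_combination X ^ (m + m * i) * hce
  rw [h2] at H
  set F' := IP (fun i => (1 - X ^ (m + m * i) : (DualNumber K)⟦X⟧)) with hF'
  have hF : F' = PowerSeries.map (TrivSqZeroExt.inlHom K K) (pr m m) := by
    rw [pr, map_IP]; simp [hF']
  have H2 : - (C ε * F' ^ 3) = Th (ex m 0)
      (fun k => sg (DualNumber K) k * ((1 - ε) ^ t k * (1 + ε) ^ t (-k))) := by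
    rw [← H]
    linear_combination (IP (fun i => 1 - C (1 - ε : DualNumber K) * X ^ (m + m * i))) * F' * h3 + F' ^ 2 * h1
  ext n
  have H3 := congrArg (fun s => TrivSqZeroExt.snd (coeff n s)) H2
  rw [hF, ← map_pow, map_neg, coeff_C_mul, coeff_map, coeff_Th, TrivSqZeroExt.snd_neg] at H3
  have e1 : TrivSqZeroExt.snd ((ε : DualNumber K) * (TrivSqZeroExt.inlHom K K) (coeff n (pr m m ^ 3)))
      = coeff n (pr m m ^ 3) := by
    simp [TrivSqZeroExt.snd_mul]
  rw [e1] at H3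
  have e2 := (TrivSqZeroExt.sndHom K K).toAddMonoidHom.map_finsum_mem
    (fun k => sg (DualNumber K) k * ((1 - ε) ^ t k * (1 + ε) ^ t (-k))) ((finE_ex (show 0 < m + 0 by omega)).eq n)
  have e3 : ∀ x : DualNumber K, (TrivSqZeroExt.sndHom K K).toAddMonoidHom x = TrivSqZeroExt.snd x := fun _ => rfl
  simp only [e3] at e2
  rw [e2] at H3
  rw [coeff_Th, ← neg_inj, H3, ← finsum_mem_neg_distrib _ ((finE_ex (show 0 < m + 0 by omega)).eq n)]
  apply finsum_mem_congr rfl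
  intro k _
  have e4 : sg (DualNumber K) k * ((1 - ε) ^ t k * (1 + ε) ^ t (-k)) =
      TrivSqZeroExt.inl (sg K k) * (1 - (k : DualNumber K) * ε) := by
    rw [eps_pow_add, eps_pow_sub]
    have : sg (DualNumber K) k = TrivSqZeroExt.inl (sg K k) := by
      unfold sg; exact (map_intCast (TrivSqZeroExt.inlHom K K) _).symm
    rw [this]
    have h5 : (t (-k) : ℤ) - t k = - k := by
      have := two_t k; have := two_t (-k); linarith
    have h6 : (t (-k) : DualNumber K) - t k = - k := by exact_mod_cast congrArg (Int.cast : ℤ → DualNumber K) h5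
    linear_combination (TrivSqZeroExt.inl (sg K k) : DualNumber K) * (ε * h6 - t k * t (-k) * hee)
  rw [e4]
  have h7 : (k : DualNumber K) = TrivSqZeroExt.inl (k : K) := by simp
  rw [h7]
  simp [TrivSqZeroExt.snd_mul]


end

section


/-- The dissection operator. -/
noncomputable def U (r : ℕ) (a : K⟦X⟧) : K⟦X⟧ := PowerSeries.mk fun n => coeff (5 * n + r) a

theorem coeff_U (r n : ℕ) (a : K⟦X⟧) : coeff n (U r a) = coeff (5 * n + r) a := by rw [U, coeff_mk]

theorem U_add (r : ℕ) (a b : K⟦X⟧) : U r (a + b) = U r a + U r b := by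
  ext n; simp [coeff_U]

theorem U_sub (r : ℕ) (a b : K⟦X⟧) : U r (a - b) = U r a - U r b := by
  ext n; simp [coeff_U]

theorem U_ofNat (r : ℕ) (c : ℕ) (a : K⟦X⟧) : U r ((c : K⟦X⟧) * a) = c * U r a := by
  ext n
  have : (c : K⟦X⟧) = C (c : K) := by simp
  rw [this, coeff_U, coeff_C_mul, coeff_C_mul, coeff_U]

theorem Th_pow5 {ι : Type*} {e : ι → ℕ} (he : FinE e) (c : ι → K) :
    Th e c ^ 5 = Th (fun i => 5 * e i) c := by
  apply eq_of_Cg; intro N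
  have h1 : ∀ (n : ℕ) {a b : K⟦X⟧}, Cg N a b → Cg N (a ^ n) (b ^ n) := by
    intro n a b h
    induction n with
    | zero => simpa using Cg.refl N 1
    | succ n ih => rw [pow_succ, pow_succ]; exact ih.mul h
  refine (h1 5 (Th_Cg c N (he N).toFinset (by simp))).trans ?_
  rw [sum_pow_char]
  refine Cg.trans ?_ (Th_Cg c N (he N).toFinset ?_).symm
  · have : ∀ i, (C (c i) * X ^ e i : K⟦X⟧) ^ 5 = C (c i) * X ^ (5 * e i) := by
      intro i
      rw [mul_pow, ← map_pow, ZMod.pow_card, ← pow_mul, mul_comm 5]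
    simp only [this]; exact Cg.refl _ _
  · intro i hi; simp; omega

theorem eq_Th (x : K⟦X⟧) : x = Th (fun i : ℕ => i) (fun i => coeff i x) := by
  ext n
  rw [coeff_Th]
  have : {i : ℕ | i = n} = {n} := by ext; simp
  rw [this, finsum_mem_singleton]

theorem finE_id : FinE (fun i : ℕ => i) := fun N => Set.finite_lt_nat N

theorem U_pow_mul (r : ℕ) (x a : K⟦X⟧) (hr : r < 5) : U r (x ^ 5 * a) = x * U r a := by
  ext n
  have h1 : Cg (5 * n + 5) (x ^ 5) (∑ i ∈ range (5 * n + 5), C (coeff i x) * X ^ (5 * i)) := by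
    conv_lhs => rw [eq_Th x]
    rw [Th_pow5 finE_id]
    apply Th_Cg
    intro i hi; simp; omega
  have h2 : Cg (n + 1) x (∑ i ∈ range (5 * n + 5), C (coeff i x) * X ^ i) := by
    conv_lhs => rw [eq_Th x]
    apply Th_Cg
    intro i hi; simp; omega
  rw [coeff_U, (h1.mul (Cg.refl _ a)).coeff (by omega), (h2.mul (Cg.refl _ (U r a))).coeff (by omega),
    Finset.sum_mul, Finset.sum_mul, map_sum, map_sum]
  apply Finset.sum_congr rfl
  intro i _
  rw [mul_assoc, mul_assoc, coeff_C_mul, coeff_C_mul, coeff_X_pow_mul', coeff_X_pow_mul', coeff_U]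
  congr 1
  by_cases h : i ≤ n
  · rw [if_pos h, if_pos (by omega)]
    congr 2; omega
  · rw [if_neg h, if_neg (by omega)]

theorem U_X (r j k : ℕ) (h : j = 5 * k + r) : U r (X ^ j : K⟦X⟧) = X ^ k := by
  ext n
  rw [coeff_U, coeff_X_pow, coeff_X_pow]
  congr 1; simp; omega

theorem U_X' (r j : ℕ) (hr : r < 5) (h : j % 5 ≠ r) : U r (X ^ j : K⟦X⟧) = 0 := by
  ext n
  rw [coeff_U, coeff_X_pow, if_neg (by omega)]; simp

theorem UY (r c j k : ℕ) (y : K⟦X⟧) (hr : r < 5) (h : j = 5 * k + r) :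
    U r ((c : K⟦X⟧) * X ^ j * y ^ 5) = (c : K⟦X⟧) * X ^ k * y := by
  rw [mul_assoc, U_ofNat, mul_comm (X ^ j), U_pow_mul _ _ _ hr, U_X r j k h]; ring

theorem UY' (r c j : ℕ) (y : K⟦X⟧) (hr : r < 5) (h : j % 5 ≠ r) :
    U r ((c : K⟦X⟧) * X ^ j * y ^ 5) = 0 := by
  rw [mul_assoc, U_ofNat, mul_comm (X ^ j), U_pow_mul _ _ _ hr, U_X' r j hr h]; ring

theorem sg5 (l : ℤ) : sg K (5 * l) = sg K l := by
  rw [show 5 * l = 2 * (2 * l) + l by ring, sg_add, sg_two_mul, one_mul]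

theorem two_ex (a b : ℕ) (k : ℤ) : 2 * (ex a b k : ℤ) = a * (k * (k + 1)) + b * (k * (k - 1)) := by
  have h1 := two_t k
  have h2 := two_t (-k)
  unfold ex; push_cast
  linear_combination a * h1 + b * h2

theorem th_piece (e : ℤ → ℕ) (c : ℤ → K) (σ : ℤ ≃ ℤ) (k : ℕ) (u : K) (a b : ℕ) (hab : 0 < a + b)
    (h1 : ∀ l, 2 * (e (σ l) : ℤ) = 2 * k + 5 * (2 * ex a b l : ℤ)) (h2 : ∀ l, c (σ l) = u * sg K l) :
    Th e c = C u * X ^ k * th a b ^ 5 := by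
  have hf : FinE (fun i => 5 * ex a b i) := fun N =>
    (finE_ex hab N).subset (fun i hi => by simp only [Set.mem_ofPred_eq] at *; omega)
  rw [th, Th_pow5 (finE_ex hab), mul_assoc, Th_X, Th_smul, Th_equiv σ e c]
  · congr 1
    · funext l; have := h1 l; simp only [Function.comp]; omega
    · funext l; exact h2 l
  · intro N
    exact (finE_ex hab N).subset (fun i hi => by simp only [Set.mem_ofPred_eq] at *; omega)

theorem ex_comm_finE (σ : ℤ → ℤ) (hσ : Function.Injective σ) (a b : ℕ) (hab : 0 < a + b) :
    FinE (fun j => ex a b (σ j)) := (finE_ex hab).comp hσ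

theorem phi_dissect : th 1 1 = th 1 1 ^ 25 + (3 : K⟦X⟧) * X ^ 1 * th 3 7 ^ 5 + (2 : K⟦X⟧) * X ^ 4 * th 1 9 ^ 5 := by
  have h := Th_mod5 (finE_ex (show 0 < 1 + 1 by norm_num)) (sg K)
  have p0 : Th (fun j => ex 1 1 (5 * j)) (fun j => sg K (5 * j)) = th 1 1 ^ 25 := by
    have e5 : FinE (fun i => 5 * ex 1 1 i) := fun N =>
      (finE_ex (show 0 < 1 + 1 by norm_num) N).subset (fun i hi => by simp only [Set.mem_ofPred_eq] at *; omega)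
    rw [show (25 : ℕ) = 5 * 5 by norm_num, pow_mul, th, Th_pow5 (finE_ex (by norm_num)), Th_pow5 e5]
    congr 1
    · funext j
      have h1 := two_ex 1 1 j
      have h2 := two_ex 1 1 (5 * j)
      push_cast at h1 h2
      have : (2 * ex 1 1 (5 * j) : ℤ) = 2 * (5 * (5 * ex 1 1 j)) := by linarith
      omega
    · funext j; exact sg5 j
  have p1 := th_piece (fun j => ex 1 1 (5 * j + 1)) (fun j => sg K (5 * j + 1)) (Equiv.neg ℤ) 1 (-1) 3 7
    (by norm_num)
    (by intro l; simp only [Equiv.neg_apply]; rw [two_ex, two_ex]; push_cast; ring)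
    (by intro l; simp only [Equiv.neg_apply]; rw [sg_succ, sg5, sg_neg]; ring)
  have p4 := th_piece (fun j => ex 1 1 (5 * j + 4)) (fun j => sg K (5 * j + 4)) (Equiv.subRight 1) 1 (-1) 3 7
    (by norm_num)
    (by intro l; simp only [Equiv.subRight_apply]; rw [two_ex, two_ex]; push_cast; ring)
    (by intro l; simp only [Equiv.subRight_apply]
        have := sg_succ (R := K) (5 * (l - 1) + 4)
        rw [show 5 * (l - 1) + 4 + 1 = 5 * l by ring, sg5] at this
        linear_combination this)
  have p2 := th_piece (fun j => ex 1 1 (5 * j + 2)) (fun j => sg K (5 * j + 2)) (Equiv.neg ℤ) 4 1 1 9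
    (by norm_num)
    (by intro l; simp only [Equiv.neg_apply]; rw [two_ex, two_ex]; push_cast; ring)
    (by intro l; simp only [Equiv.neg_apply]
        rw [show (5 * -l + 2) = 5 * -l + 2 * 1 by ring, sg_add, sg_two_mul, sg5, sg_neg]; ring)
  have p3 := th_piece (fun j => ex 1 1 (5 * j + 3)) (fun j => sg K (5 * j + 3)) (Equiv.subRight 1) 4 1 1 9
    (by norm_num)
    (by intro l; simp only [Equiv.subRight_apply]; rw [two_ex, two_ex]; push_cast; ring)
    (by intro l; simp only [Equiv.subRight_apply]
        rw [show (5 * (l - 1) + 3) = 5 * l + 2 * (-1) by ring, sg_add, sg_two_mul, sg5]; ring)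
  rw [p0, p1, p2, p3, p4] at h
  change th 1 1 = _ at h
  have h5 : (5 : K⟦X⟧) = 0 := by exact_mod_cast CharP.cast_eq_zero K⟦X⟧ 5
  simp only [map_neg, map_one] at h
  push_cast
  linear_combination h - X * th 3 7 ^ 5 * h5

theorem cube_dissect (m : ℕ) (hm : 0 < m) :
    pr m m ^ 3 = th (2 * m) (3 * m) ^ 5 + (2 : K⟦X⟧) * X ^ m * th m (4 * m) ^ 5 := by
  have h5' : (5 : K) = 0 := by decide
  have h := Th_mod5 (finE_ex (show 0 < m + 0 by omega)) (fun k => sg K k * (k : K))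
  have p0 : Th (fun j => ex m 0 (5 * j)) (fun j => sg K (5 * j) * ((5 * j : ℤ) : K)) = 0 := by
    have : (fun j => sg K (5 * j) * ((5 * j : ℤ) : K)) = fun j => 0 := by
      funext j; push_cast; rw [h5']; ring
    rw [this]; ext n; rw [coeff_Th]; simp
  have p2 : Th (fun j => ex m 0 (5 * j + 2)) (fun j => sg K (5 * j + 2) * ((5 * j + 2 : ℤ) : K)) = 0 := by
    set T := Th (fun j => ex m 0 (5 * j + 2)) (fun j => sg K (5 * j + 2) * ((5 * j + 2 : ℤ) : K)) with hT
    have : T = C (-1) * T := by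
      conv_lhs => rw [hT]
      rw [hT, Th_smul (ex_comm_finE (fun j => 5 * j + 2) (fun a b h => by simpa using h) m 0 (by omega)),
        Th_equiv (Equiv.subLeft (-1))]
      congr 1
      · funext j
        simp only [Function.comp, Equiv.subLeft_apply]
        have h1 := two_ex m 0 (5 * (-1 - j) + 2)
        have h2 := two_ex m 0 (5 * j + 2)
        have : (2 * ex m 0 (5 * (-1 - j) + 2) : ℤ) = 2 * ex m 0 (5 * j + 2) := by rw [h1, h2]; push_cast; ring
        omega
      · funext j
        simp only [Function.comp, Equiv.subLeft_apply]
        rw [show 5 * (-1 - j) + 2 = -((5 * j + 2) + 1) by ring, sg_neg, sg_succ]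
        push_cast
        linear_combination sg K (5 * j + 2) * (2 * j + 1) * h5'
    have h5 : (5 : K⟦X⟧) = 0 := by exact_mod_cast CharP.cast_eq_zero K⟦X⟧ 5
    simp only [map_neg, map_one] at this
    linear_combination 3 * this - T * h5
  have p1 := th_piece (fun j => ex m 0 (5 * j + 1)) (fun j => sg K (5 * j + 1) * ((5 * j + 1 : ℤ) : K))
    (Equiv.neg ℤ) m (-1) m (4 * m) (by omega)
    (by intro l; simp only [Equiv.neg_apply]; rw [two_ex, two_ex]; push_cast; ring)
    (by intro l; simp only [Equiv.neg_apply]; rw [sg_succ, sg5, sg_neg]; push_cast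
        linear_combination sg K l * l * h5')
  have p4 := th_piece (fun j => ex m 0 (5 * j + 4)) (fun j => sg K (5 * j + 4) * ((5 * j + 4 : ℤ) : K))
    (Equiv.subRight 1) 0 1 (2 * m) (3 * m) (by omega)
    (by intro l; simp only [Equiv.subRight_apply]; rw [two_ex, two_ex]; push_cast; ring)
    (by intro l; simp only [Equiv.subRight_apply]
        have := sg_succ (R := K) (5 * (l - 1) + 4)
        rw [show 5 * (l - 1) + 4 + 1 = 5 * l by ring, sg5] at this
        push_cast
        linear_combination (sg K (5 * (l - 1) + 4) * l) * h5' - this)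
  have p3 := th_piece (fun j => ex m 0 (5 * j + 3)) (fun j => sg K (5 * j + 3) * ((5 * j + 3 : ℤ) : K))
    (Equiv.subRight 1) m 3 m (4 * m) (by omega)
    (by intro l; simp only [Equiv.subRight_apply]; rw [two_ex, two_ex]; push_cast; ring)
    (by intro l; simp only [Equiv.subRight_apply]
        rw [show (5 * (l - 1) + 3) = 5 * l + 2 * (-1) by ring, sg_add, sg_two_mul, sg5]
        push_cast
        linear_combination sg K l * (l - 1) * h5')
  rw [p0, p1, p2, p3, p4] at h
  rw [jacobi m hm, h]
  simp only [map_neg, map_one]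
  have : (C (3 : K) : K⟦X⟧) = 3 := map_ofNat C 3
  rw [this]
  push_cast; ring


end

section


theorem F1 : th 1 1 * pr 2 2 = pr 1 1 ^ 2 := by
  have h1 := pr_split 1 1 2 (by norm_num) (by norm_num)
  have h2 := triple' 1 1 (by norm_num)
  simp only [Finset.prod_range_succ, Finset.prod_range_zero] at h1
  norm_num at h1 h2
  rw [← h2, h1]; ring

theorem pr5 (m : ℕ) (hm : 0 < m) : pr (5 * m) (5 * m) = pr m m ^ 5 := (pr_pow5 m m hm).symm

theorem F4a : th 2 3 * th 1 4 = pr 1 1 ^ 6 := by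
  have h1 := pr_split 1 1 5 (by norm_num) (by norm_num)
  have h2 := triple' 2 3 (by norm_num)
  have h3 := triple' 1 4 (by norm_num)
  have h5 := pr5 1 (by norm_num)
  simp only [Finset.prod_range_succ, Finset.prod_range_zero] at h1
  norm_num at h1 h2 h3 h5
  rw [← h2, ← h3]
  calc _ = (pr 1 5 * pr 2 5 * pr 3 5 * pr 4 5 * pr 5 5) * pr 5 5 := by ring
    _ = _ := by rw [← h1, h5]; ring

theorem F4b : th 4 6 * th 2 8 = pr 2 2 ^ 6 := by
  have h1 := pr_split 2 2 5 (by norm_num) (by norm_num)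
  have h2 := triple' 4 6 (by norm_num)
  have h3 := triple' 2 8 (by norm_num)
  have h5 := pr5 2 (by norm_num)
  simp only [Finset.prod_range_succ, Finset.prod_range_zero] at h1
  norm_num at h1 h2 h3 h5
  rw [← h2, ← h3]
  calc _ = (pr 2 10 * pr 4 10 * pr 6 10 * pr 8 10 * pr 10 10) * pr 10 10 := by ring
    _ = _ := by rw [← h1, h5]; ring

theorem F4c : th 2 3 * pr 2 2 ^ 10 = th 3 7 * th 2 8 * pr 1 1 ^ 5 := by
  have s2 := pr_split 2 5 2 (by norm_num) (by norm_num)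
  have s3 := pr_split 3 5 2 (by norm_num) (by norm_num)
  have h1 := triple' 2 3 (by norm_num)
  have h2 := triple' 3 7 (by norm_num)
  have h3 := triple' 2 8 (by norm_num)
  have h5 := pr5 2 (by norm_num)
  have h6 := pr5 1 (by norm_num)
  simp only [Finset.prod_range_succ, Finset.prod_range_zero] at s2 s3
  norm_num at s2 s3 h1 h2 h3 h5 h6
  rw [← h1, ← h2, ← h3, ← h6, show (10 : ℕ) = 5 * 2 by norm_num, pow_mul, ← h5, s2, s3]
  ring

theorem F4d : th 1 4 * pr 2 2 ^ 10 = th 1 9 * th 4 6 * pr 1 1 ^ 5 := by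
  have s2 := pr_split 1 5 2 (by norm_num) (by norm_num)
  have s3 := pr_split 4 5 2 (by norm_num) (by norm_num)
  have h1 := triple' 1 4 (by norm_num)
  have h2 := triple' 1 9 (by norm_num)
  have h3 := triple' 4 6 (by norm_num)
  have h5 := pr5 2 (by norm_num)
  have h6 := pr5 1 (by norm_num)
  simp only [Finset.prod_range_succ, Finset.prod_range_zero] at s2 s3
  norm_num at s2 s3 h1 h2 h3 h5 h6
  rw [← h1, ← h2, ← h3, ← h6, show (10 : ℕ) = 5 * 2 by norm_num, pow_mul, ← h5, s2, s3]
  ring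

theorem pr_unit (a m : ℕ) (ha : 0 < a) (hm : 0 < m) : IsUnit (pr a m) := by
  apply isUnit_IP (good_factor' a hm)
  simp; omega

theorem pr_const (a m : ℕ) (ha : 0 < a) (hm : 0 < m) : constantCoeff (pr a m) = 1 := by
  have := (IP_Cg (good_factor' (R := K) a hm) (le_refl 1)).coeff (d := 0) (by omega)
  rw [← coeff_zero_eq_constantCoeff_apply, pr, this]
  simp [ha.ne']

theorem h5ps : (5 : K⟦X⟧) = 0 := by exact_mod_cast CharP.cast_eq_zero K⟦X⟧ 5

theorem F4e : th 3 7 * th 1 9 * pr 1 1 ^ 4 = pr 2 2 ^ 14 := by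
  have h1 : pr 1 1 ≠ 0 := (pr_unit 1 1 (by norm_num) (by norm_num)).ne_zero
  have h2 : pr 2 2 ≠ 0 := (pr_unit 2 2 (by norm_num) (by norm_num)).ne_zero
  apply mul_right_cancel₀ (pow_ne_zero 6 h1)
  apply mul_right_cancel₀ (pow_ne_zero 6 h2)
  linear_combination pr 2 2 ^ 20 * F4a - th 3 7 * th 1 9 * pr 1 1 ^ 10 * F4b - th 1 4 * pr 2 2 ^ 10 * F4c
    - th 3 7 * th 2 8 * pr 1 1 ^ 5 * F4d

theorem th_const (a b : ℕ) (ha : 0 < a) (hb : 0 < b) : constantCoeff (th a b) = 1 := by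
  rw [← triple' a b (by omega), map_mul, map_mul, pr_const a _ ha (by omega), pr_const b _ hb (by omega),
    pr_const _ _ (by omega) (by omega)]; simp


end

section


theorem two_class {α : Type*} {T S1 S2 S : Set α} (hT : T.Finite) (w : α → K) (σ1 σ2 : α → α)
    (hS : S = S1 ∪ S2) (b1 : Set.BijOn σ1 T S1) (b2 : Set.BijOn σ2 T S2) :
    (∑ᶠ p ∈ S, w p) + ∑ᶠ p ∈ S1 ∩ S2, w p = ∑ᶠ p ∈ T, (w (σ1 p) + w (σ2 p)) := by
  have f1 : S1.Finite := by rw [← b1.image_eq]; exact hT.image _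
  have f2 : S2.Finite := by rw [← b2.image_eq]; exact hT.image _
  rw [hS, finsum_mem_union_inter f1 f2, finsum_mem_add_distrib hT]
  congr 1
  · exact (finsum_mem_eq_of_bijOn σ1 b1 (fun _ _ => rfl)).symm
  · exact (finsum_mem_eq_of_bijOn σ2 b2 (fun _ _ => rfl)).symm

theorem ex11 (x : ℤ) : (ex 1 1 x : ℤ) = x * x := by
  have := two_ex 1 1 x
  push_cast at this; linarith

theorem ex20 (x : ℤ) : (ex 2 0 x : ℤ) = x * x + x := by
  have := two_ex 2 0 x
  push_cast at this; linarith

theorem five_prime : Prime (5 : ℤ) := by norm_num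

theorem sq_class {a b : ℤ} (h : (5 : ℤ) ∣ a * b) : 5 ∣ a ∨ 5 ∣ b := five_prime.dvd_or_dvd h

theorem EqE : U 0 (th 1 1 ^ 2) + th 1 1 ^ 10 = 2 * th 1 1 ^ 2 := by
  have fe : FinE (ex 1 1) := finE_ex (by norm_num)
  have h2 : th 1 1 ^ 2 = Th (fun p : ℤ × ℤ => ex 1 1 p.1 + ex 1 1 p.2) (fun p => sg K p.1 * sg K p.2) := by
    rw [sq, th, Th_mul fe fe]
  have h10 : th 1 1 ^ 10 = Th (fun p : ℤ × ℤ => 5 * (ex 1 1 p.1 + ex 1 1 p.2)) (fun p => sg K p.1 * sg K p.2) := by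
    rw [show (10 : ℕ) = 2 * 5 by norm_num, pow_mul, h2, Th_pow5 (fe.prod fe)]
  ext n
  rw [map_add, coeff_U, h10, h2, show (2 : K⟦X⟧) = C (2 : K) from (map_ofNat C 2).symm, coeff_C_mul,
    coeff_Th, coeff_Th, coeff_Th]
  set T := {p : ℤ × ℤ | ex 1 1 p.1 + ex 1 1 p.2 = n} with hT
  have memT : ∀ p : ℤ × ℤ, p ∈ T ↔ p.1 * p.1 + p.2 * p.2 = (n : ℤ) := by
    intro p; rw [← ex11, ← ex11, hT, Set.mem_ofPred_eq]; norm_cast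
  have fT : T.Finite := (fe.prod fe).eq n
  set S := {p : ℤ × ℤ | ex 1 1 p.1 + ex 1 1 p.2 = 5 * n + 0} with hS
  have memS : ∀ p : ℤ × ℤ, p ∈ S ↔ p.1 * p.1 + p.2 * p.2 = 5 * (n : ℤ) := by
    intro p; rw [← ex11, ← ex11, hS, Set.mem_ofPred_eq]; norm_cast
  set S1 := {p : ℤ × ℤ | p ∈ S ∧ (5 : ℤ) ∣ p.1 - 2 * p.2} with hS1
  set S2 := {p : ℤ × ℤ | p ∈ S ∧ (5 : ℤ) ∣ p.1 + 2 * p.2} with hS2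
  have key := two_class (S := S) (S1 := S1) (S2 := S2) fT (fun p => sg K p.1 * sg K p.2)
    (fun p => (2 * p.1 - p.2, p.1 + 2 * p.2)) (fun p => (2 * p.1 - p.2, -(p.1 + 2 * p.2))) (by
      ext ⟨x, y⟩
      rw [hS1, hS2]
      simp only [Set.mem_union, Set.mem_ofPred_eq, memS]
      constructor
      · intro h
        have : (5 : ℤ) ∣ (x - 2 * y) * (x + 2 * y) := ⟨n - y * y, by linear_combination h⟩
        rcases sq_class this with h' | h'
        · exact Or.inl ⟨h, h'⟩
        · exact Or.inr ⟨h, h'⟩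
      · rintro (h | h) <;> exact h.1)
    (by
      refine ⟨?_, ?_, ?_⟩
      · rintro ⟨x, y⟩ h
        rw [memT] at h
        simp only [hS1, Set.mem_ofPred_eq, memS]
        simp only at h
        exact ⟨by linear_combination 5 * h, ⟨-y, by ring⟩⟩
      · rintro ⟨x, y⟩ - ⟨x', y'⟩ - h
        simp only [Prod.mk.injEq] at h ⊢
        omega
      · rintro ⟨x, y⟩ h
        simp only [hS1, Set.mem_ofPred_eq, memS] at h
        obtain ⟨h, c, hc⟩ := h
        refine ⟨(y + 2 * c, -c), ?_, ?_⟩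
        · rw [memT]
          simp only
          have : x = 5 * c + 2 * y := by linarith
          subst this
          have : 5 * ((y + 2 * c) * (y + 2 * c) + -c * -c) = 5 * (n : ℤ) := by linear_combination h
          linarith
        · simp only [Prod.mk.injEq]; omega)
    (by
      refine ⟨?_, ?_, ?_⟩
      · rintro ⟨x, y⟩ h
        rw [memT] at h
        simp only [hS2, Set.mem_ofPred_eq, memS]
        simp only at h
        exact ⟨by linear_combination 5 * h, ⟨-y, by ring⟩⟩
      · rintro ⟨x, y⟩ - ⟨x', y'⟩ - h
        simp only [Prod.mk.injEq] at h ⊢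
        omega
      · rintro ⟨x, y⟩ h
        simp only [hS2, Set.mem_ofPred_eq, memS] at h
        obtain ⟨h, c, hc⟩ := h
        refine ⟨(-y + 2 * c, -c), ?_, ?_⟩
        · rw [memT]
          simp only
          have : x = 5 * c - 2 * y := by linarith
          subst this
          have : 5 * ((-y + 2 * c) * (-y + 2 * c) + -c * -c) = 5 * (n : ℤ) := by linear_combination h
          linarith
        · simp only [Prod.mk.injEq]; omega)
  have hI : ∑ᶠ p ∈ {p : ℤ × ℤ | 5 * (ex 1 1 p.1 + ex 1 1 p.2) = n}, sg K p.1 * sg K p.2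
      = ∑ᶠ p ∈ S1 ∩ S2, sg K p.1 * sg K p.2 := by
    have memQ : ∀ p : ℤ × ℤ, p ∈ {p : ℤ × ℤ | 5 * (ex 1 1 p.1 + ex 1 1 p.2) = n} ↔
        5 * (p.1 * p.1 + p.2 * p.2) = (n : ℤ) := by
      intro p; rw [← ex11, ← ex11, Set.mem_ofPred_eq]; norm_cast
    refine finsum_mem_eq_of_bijOn (fun p => (5 * p.1, 5 * p.2)) ⟨?_, ?_, ?_⟩ ?_
    · rintro ⟨x, y⟩ h
      rw [memQ] at h
      simp only [hS1, hS2, Set.mem_inter_iff, Set.mem_ofPred_eq, memS]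
      simp only at h
      refine ⟨⟨by linear_combination 5 * h, ⟨x - 2 * y, by ring⟩⟩, by linear_combination 5 * h, ⟨x + 2 * y, by ring⟩⟩
    · rintro ⟨x, y⟩ - ⟨x', y'⟩ - h
      simp only [Prod.mk.injEq] at h ⊢
      omega
    · rintro ⟨x, y⟩ h
      simp only [hS1, hS2, Set.mem_inter_iff, Set.mem_ofPred_eq, memS] at h
      obtain ⟨⟨h, h1⟩, -, h2⟩ := h
      obtain ⟨a, rfl⟩ : (5 : ℤ) ∣ x := by omega
      obtain ⟨b, rfl⟩ : (5 : ℤ) ∣ y := by omega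
      refine ⟨(a, b), ?_, rfl⟩
      rw [memQ]; simp only; linarith
    · rintro ⟨x, y⟩ -
      simp only [sg5]
  rw [hI, key, finsum_mem_eq_finite_toFinset_sum _ fT, finsum_mem_eq_finite_toFinset_sum _ fT, Finset.mul_sum]
  apply Finset.sum_congr rfl
  rintro ⟨x, y⟩ -
  simp only [sg_neg, sub_eq_add_neg, sg_add, sg_two_mul]; ring

theorem f2cube : 2 * pr 2 2 ^ 3 = Th (ex 2 0) (fun z => sg K z * (2 * z + 1)) := by
  have fe : FinE (ex 2 0) := finE_ex (by norm_num)
  have h := jacobi 2 (by norm_num)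
  have h' : pr 2 2 ^ 3 = Th (ex 2 0) (fun z => sg K z * (z + 1)) := by
    rw [h, Th_equiv (Equiv.subLeft (-1))]
    congr 1
    · funext z
      simp only [Function.comp, Equiv.subLeft_apply]
      have h1 := ex20 (-1 - z)
      have h2 := ex20 z
      have : (ex 2 0 (-1 - z) : ℤ) = ex 2 0 z := by rw [h1, h2]; ring
      exact_mod_cast this
    · funext z
      simp only [Function.comp, Equiv.subLeft_apply]
      rw [show -1 - z = -(z + 1) by ring, sg_neg, sg_succ]; push_cast; ring
  rw [two_mul]
  nth_rewrite 1 [h]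
  rw [h', Th_add fe]
  congr 1; funext z; ring

theorem EqK0 : U 1 (2 * (th 1 1 * pr 2 2 ^ 3)) + 2 * (2 * (th 1 1 * pr 2 2 ^ 3)) = 0 := by
  have fe : FinE (ex 1 1) := finE_ex (by norm_num)
  have fe' : FinE (ex 2 0) := finE_ex (by norm_num)
  have h5' : (5 : K) = 0 := by decide
  have h2 : 2 * (th 1 1 * pr 2 2 ^ 3) = Th (fun p : ℤ × ℤ => ex 1 1 p.1 + ex 2 0 p.2)
      (fun p => sg K p.1 * (sg K p.2 * (2 * p.2 + 1))) := by
    rw [mul_left_comm, f2cube, th, Th_mul fe fe']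
  ext n
  rw [map_add, coeff_U, h2, show (2 : K⟦X⟧) = C (2 : K) from (map_ofNat C 2).symm, coeff_C_mul,
    coeff_Th, coeff_Th]
  set T := {p : ℤ × ℤ | ex 1 1 p.1 + ex 2 0 p.2 = n} with hT
  have memT : ∀ p : ℤ × ℤ, p ∈ T ↔ p.1 * p.1 + (p.2 * p.2 + p.2) = (n : ℤ) := by
    intro p; rw [← ex11, ← ex20, hT, Set.mem_ofPred_eq]; norm_cast
  have fT : T.Finite := (fe.prod fe').eq n
  set S := {p : ℤ × ℤ | ex 1 1 p.1 + ex 2 0 p.2 = 5 * n + 1} with hS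
  have memS : ∀ p : ℤ × ℤ, p ∈ S ↔ p.1 * p.1 + (p.2 * p.2 + p.2) = 5 * (n : ℤ) + 1 := by
    intro p; rw [← ex11, ← ex20, hS, Set.mem_ofPred_eq]; norm_cast
  set S1 := {p : ℤ × ℤ | p ∈ S ∧ (5 : ℤ) ∣ p.1 - (2 * p.2 + 1)} with hS1
  set S2 := {p : ℤ × ℤ | p ∈ S ∧ (5 : ℤ) ∣ p.1 + (2 * p.2 + 1)} with hS2
  have key := two_class (S := S) (S1 := S1) (S2 := S2) fT (fun p => sg K p.1 * (sg K p.2 * (2 * p.2 + 1)))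
    (fun p => (p.1 + 2 * p.2 + 1, p.2 - 2 * p.1)) (fun p => (p.1 - 2 * p.2 - 1, p.2 + 2 * p.1)) (by
      ext ⟨x, y⟩
      rw [hS1, hS2]
      simp only [Set.mem_union, Set.mem_ofPred_eq, memS]
      constructor
      · intro h
        have : (5 : ℤ) ∣ (x - (2 * y + 1)) * (x + (2 * y + 1)) :=
          ⟨x * x - 4 * n - 1, by linear_combination (-4) * h⟩
        rcases sq_class this with h' | h'
        · exact Or.inl ⟨h, h'⟩
        · exact Or.inr ⟨h, h'⟩
      · rintro (h | h) <;> exact h.1)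
    (by
      refine ⟨?_, ?_, ?_⟩
      · rintro ⟨x, y⟩ h
        rw [memT] at h
        simp only [hS1, Set.mem_ofPred_eq, memS]
        simp only at h
        exact ⟨by linear_combination 5 * h, ⟨x, by ring⟩⟩
      · rintro ⟨x, y⟩ - ⟨x', y'⟩ - h
        simp only [Prod.mk.injEq] at h ⊢
        omega
      · rintro ⟨x, y⟩ h
        simp only [hS1, Set.mem_ofPred_eq, memS] at h
        obtain ⟨h, c, hc⟩ := h
        refine ⟨(c, y + 2 * c), ?_, ?_⟩
        · rw [memT]
          simp only
          have : x = 5 * c + (2 * y + 1) := by linarith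
          subst this
          have : 5 * (c * c + ((y + 2 * c) * (y + 2 * c) + (y + 2 * c))) = 5 * (n : ℤ) := by
            linear_combination h
          linarith
        · simp only [Prod.mk.injEq]; omega)
    (by
      refine ⟨?_, ?_, ?_⟩
      · rintro ⟨x, y⟩ h
        rw [memT] at h
        simp only [hS2, Set.mem_ofPred_eq, memS]
        simp only at h
        exact ⟨by linear_combination 5 * h, ⟨x, by ring⟩⟩
      · rintro ⟨x, y⟩ - ⟨x', y'⟩ - h
        simp only [Prod.mk.injEq] at h ⊢
        omega
      · rintro ⟨x, y⟩ h
        simp only [hS2, Set.mem_ofPred_eq, memS] at h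
        obtain ⟨h, c, hc⟩ := h
        refine ⟨(c, y - 2 * c), ?_, ?_⟩
        · rw [memT]
          simp only
          have : x = 5 * c - (2 * y + 1) := by linarith
          subst this
          have : 5 * (c * c + ((y - 2 * c) * (y - 2 * c) + (y - 2 * c))) = 5 * (n : ℤ) := by
            linear_combination h
          linarith
        · simp only [Prod.mk.injEq]; omega)
  have hI : ∑ᶠ p ∈ S1 ∩ S2, sg K p.1 * (sg K p.2 * (2 * p.2 + 1)) = 0 := by
    apply finsum_mem_eq_zero_of_forall_eq_zero
    rintro ⟨x, y⟩ h
    simp only [hS1, hS2, Set.mem_inter_iff, Set.mem_ofPred_eq, memS] at h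
    obtain ⟨⟨h, h1⟩, -, h2⟩ := h
    obtain ⟨a, ha⟩ : (5 : ℤ) ∣ 2 * y + 1 := by omega
    have : (2 * y + 1 : K) = 0 := by
      have := congrArg (fun z : ℤ => (z : K)) ha
      push_cast at this
      rw [this, h5']; ring
    simp only [this]; ring
  rw [hI, add_zero] at key
  rw [key, finsum_mem_eq_finite_toFinset_sum _ fT, finsum_mem_eq_finite_toFinset_sum _ fT, Finset.mul_sum,
    ← Finset.sum_add_distrib]
  rw [map_zero]
  apply Finset.sum_eq_zero
  rintro ⟨x, y⟩ -
  have e1 : sg K (x + 2 * y + 1) = - sg K x := by rw [sg_succ, sg_add, sg_two_mul, mul_one]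
  have e2 : sg K (x - 2 * y - 1) = - sg K x := by
    rw [show x - 2 * y - 1 = x + 2 * (-y - 1) + 1 by ring, sg_succ, sg_add, sg_two_mul, mul_one]
  have e3 : sg K (y - 2 * x) = sg K y := by
    rw [show y - 2 * x = y + 2 * (-x) by ring, sg_add, sg_two_mul, mul_one]
  have e4 : sg K (y + 2 * x) = sg K y := by
    rw [sg_add, sg_two_mul, mul_one]
  simp only [e1, e2, e3, e4]; push_cast; ring


end

section


/-- A monomial times a fifth power. -/
noncomputable def tm (c j : ℕ) (y : K⟦X⟧) : K⟦X⟧ := (c : K⟦X⟧) * X ^ j * y ^ 5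

theorem U_tm (r c j k : ℕ) (y : K⟦X⟧) (hr : r < 5) (h : j = 5 * k + r) :
    U r (tm c j y) = (c : K⟦X⟧) * X ^ k * y := UY r c j k y hr h

theorem U_tm' (r c j : ℕ) (y : K⟦X⟧) (hr : r < 5) (h : j % 5 ≠ r) : U r (tm c j y) = 0 := UY' r c j y hr h

theorem hf1 : pr 1 1 ≠ 0 := (pr_unit 1 1 (by norm_num) (by norm_num)).ne_zero
theorem hf2 : pr 2 2 ≠ 0 := (pr_unit 2 2 (by norm_num) (by norm_num)).ne_zero

theorem F3a : pr 1 1 ^ 3 = th 2 3 ^ 5 + 2 * X * th 1 4 ^ 5 := by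
  have := cube_dissect 1 (by norm_num); norm_num at this; exact this

theorem F3b : pr 2 2 ^ 3 = th 4 6 ^ 5 + 2 * X ^ 2 * th 2 8 ^ 5 := by
  have := cube_dissect 2 (by norm_num); norm_num at this; exact this

theorem F2 : th 1 1 = (th 1 1 ^ 5) ^ 5 + 3 * X * th 3 7 ^ 5 + 2 * X ^ 4 * th 1 9 ^ 5 := by
  have := phi_dissect
  rw [pow_one] at this
  rw [← pow_mul]; exact this

theorem EqW : th 3 7 * th 4 6 - 2 * X * th 1 9 * th 2 8 = th 1 1 * pr 2 2 ^ 3 := by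
  have h0 := EqK0
  have h1 := U_ofNat 1 2 (th 1 1 * pr 2 2 ^ 3)
  push_cast at h1
  rw [h1] at h0
  have h2 : th 1 1 * pr 2 2 ^ 3 = tm 1 0 (th 1 1 ^ 5 * th 4 6) + tm 3 1 (th 3 7 * th 4 6)
      + tm 2 4 (th 1 9 * th 4 6) + tm 2 2 (th 1 1 ^ 5 * th 2 8) + tm 6 3 (th 3 7 * th 2 8)
      + tm 4 6 (th 1 9 * th 2 8) := by
    have e : th 1 1 * pr 2 2 ^ 3 = ((th 1 1 ^ 5) ^ 5 + 3 * X * th 3 7 ^ 5 + 2 * X ^ 4 * th 1 9 ^ 5)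
      * (th 4 6 ^ 5 + 2 * X ^ 2 * th 2 8 ^ 5) := by rw [← F2, ← F3b]
    rw [e]; simp only [tm]; push_cast; ring
  have h3 : U 1 (th 1 1 * pr 2 2 ^ 3) = 3 * th 3 7 * th 4 6 + 4 * X * th 1 9 * th 2 8 := by
    rw [h2]; simp only [U_add]
    rw [U_tm' 1 1 0, U_tm 1 3 1 0, U_tm' 1 2 4, U_tm' 1 2 2, U_tm' 1 6 3, U_tm 1 4 6 1] <;> norm_num
    ring
  rw [h3] at h0
  linear_combination h0 - (th 3 7 * th 4 6 + 2 * X * th 1 9 * th 2 8 + th 1 1 * pr 2 2 ^ 3) * h5ps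

theorem phi_sq : th 1 1 ^ 2 = tm 1 0 (th 1 1 ^ 10) + tm 6 1 (th 1 1 ^ 5 * th 3 7) + tm 4 4 (th 1 1 ^ 5 * th 1 9)
      + tm 9 2 (th 3 7 ^ 2) + tm 12 5 (th 3 7 * th 1 9) + tm 4 8 (th 1 9 ^ 2) := by
  have e : th 1 1 ^ 2 = ((th 1 1 ^ 5) ^ 5 + 3 * X * th 3 7 ^ 5 + 2 * X ^ 4 * th 1 9 ^ 5) ^ 2 := by rw [← F2]
  rw [e]; simp only [tm]; push_cast; ring

theorem EqR0 : th 1 1 ^ 10 + X * th 3 7 * th 1 9 = th 1 1 ^ 2 := by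
  have h0 := EqE
  have h3 : U 0 (th 1 1 ^ 2) = th 1 1 ^ 10 + 12 * X * th 3 7 * th 1 9 := by
    conv_lhs => rw [phi_sq]
    simp only [U_add]
    rw [U_tm 0 1 0 0, U_tm' 0 6 1, U_tm' 0 4 4, U_tm' 0 9 2, U_tm 0 12 5 1, U_tm' 0 4 8] <;> norm_num
    ring
  rw [h3] at h0
  linear_combination 3 * h0 + (th 1 1 ^ 2 - th 1 1 ^ 10 - 7 * X * th 3 7 * th 1 9) * h5ps

theorem EqR : pr 1 1 ^ 24 + X * pr 2 2 ^ 24 = pr 1 1 ^ 8 * pr 2 2 ^ 8 := by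
  have h10 : th 1 1 ^ 10 * pr 2 2 ^ 10 = pr 1 1 ^ 20 := by rw [← mul_pow, F1]; ring
  have h2 : th 1 1 ^ 2 * pr 2 2 ^ 2 = pr 1 1 ^ 4 := by rw [← mul_pow, F1]; ring
  linear_combination pr 1 1 ^ 4 * pr 2 2 ^ 10 * EqR0 - pr 1 1 ^ 4 * h10 + pr 1 1 ^ 4 * pr 2 2 ^ 8 * h2
    - X * pr 2 2 ^ 10 * F4e

theorem EqW' : th 3 7 * th 4 6 - 2 * X * th 1 9 * th 2 8 = pr 1 1 ^ 2 * pr 2 2 ^ 2 := by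
  rw [EqW]; linear_combination pr 2 2 ^ 2 * F1

theorem step1 (B0 : K⟦X⟧) (h : B0 * pr 2 2 ^ 4 = pr 1 1 ^ 4) : U 1 B0 = th 1 1 ^ 6 * pr 2 2 ^ 2 := by
  have h1 : pr 2 2 ^ 5 * B0 = th 1 1 ^ 2 * pr 2 2 ^ 3 := by
    linear_combination pr 2 2 * h - pr 2 2 * (th 1 1 * pr 2 2 + pr 1 1 ^ 2) * F1
  have h2 : th 1 1 ^ 2 * pr 2 2 ^ 3 =
      tm 1 0 (th 1 1 ^ 10 * th 4 6) + tm 6 1 (th 1 1 ^ 5 * th 3 7 * th 4 6) + tm 4 4 (th 1 1 ^ 5 * th 1 9 * th 4 6)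
      + tm 9 2 (th 3 7 ^ 2 * th 4 6) + tm 12 5 (th 3 7 * th 1 9 * th 4 6) + tm 4 8 (th 1 9 ^ 2 * th 4 6)
      + tm 2 2 (th 1 1 ^ 10 * th 2 8) + tm 12 3 (th 1 1 ^ 5 * th 3 7 * th 2 8)
      + tm 8 6 (th 1 1 ^ 5 * th 1 9 * th 2 8)
      + tm 18 4 (th 3 7 ^ 2 * th 2 8) + tm 24 7 (th 3 7 * th 1 9 * th 2 8)
      + tm 8 10 (th 1 9 ^ 2 * th 2 8) := by
    rw [F3b]; conv_lhs => rw [phi_sq]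
    simp only [tm]; push_cast; ring
  have h3 := U_pow_mul 1 (pr 2 2) B0 (by norm_num)
  rw [h1, h2] at h3
  simp only [U_add] at h3
  rw [U_tm' 1 1 0 _ (by norm_num) (by norm_num), U_tm 1 6 1 0 _ (by norm_num) (by norm_num),
    U_tm' 1 4 4 _ (by norm_num) (by norm_num), U_tm' 1 9 2 _ (by norm_num) (by norm_num),
    U_tm' 1 12 5 _ (by norm_num) (by norm_num), U_tm' 1 4 8 _ (by norm_num) (by norm_num),
    U_tm' 1 2 2 _ (by norm_num) (by norm_num), U_tm' 1 12 3 _ (by norm_num) (by norm_num),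
    U_tm 1 8 6 1 _ (by norm_num) (by norm_num), U_tm' 1 18 4 _ (by norm_num) (by norm_num),
    U_tm' 1 24 7 _ (by norm_num) (by norm_num), U_tm' 1 8 10 _ (by norm_num) (by norm_num)] at h3
  push_cast at h3
  apply mul_left_cancel₀ hf2
  linear_combination -h3 + th 1 1 ^ 5 * EqW + th 1 1 ^ 5 * (th 3 7 * th 4 6 + 2 * X * th 1 9 * th 2 8) * h5ps

theorem f2four : pr 2 2 ^ 12 = th 4 6 ^ 20 + 8 * X ^ 2 * th 4 6 ^ 15 * th 2 8 ^ 5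
    + 24 * X ^ 4 * th 4 6 ^ 10 * th 2 8 ^ 10 + 32 * X ^ 6 * th 4 6 ^ 5 * th 2 8 ^ 15 + 16 * X ^ 8 * th 2 8 ^ 20 := by
  rw [show (12 : ℕ) = 3 * 4 by norm_num, pow_mul, F3b]; ring

theorem step2a : pr 2 2 ^ 2 * U 4 (th 1 1 * pr 2 2 ^ 2) =
    24 * th 1 1 ^ 5 * th 4 6 ^ 2 * th 2 8 ^ 2 + 48 * X * th 3 7 * th 2 8 ^ 4 + 2 * th 1 9 * th 4 6 ^ 4 := by
  have h3 := U_pow_mul 4 (pr 2 2 ^ 2) (th 1 1 * pr 2 2 ^ 2) (by norm_num)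
  have h1 : (pr 2 2 ^ 2) ^ 5 * (th 1 1 * pr 2 2 ^ 2) =
      ((th 1 1 ^ 5) ^ 5 + 3 * X * th 3 7 ^ 5 + 2 * X ^ 4 * th 1 9 ^ 5) * pr 2 2 ^ 12 := by
    rw [← F2]; ring
  have h2 : (pr 2 2 ^ 2) ^ 5 * (th 1 1 * pr 2 2 ^ 2) =
      tm 1 0 (th 1 1 ^ 5 * th 4 6 ^ 4) + tm 8 2 (th 1 1 ^ 5 * th 4 6 ^ 3 * th 2 8)
      + tm 24 4 (th 1 1 ^ 5 * th 4 6 ^ 2 * th 2 8 ^ 2) + tm 32 6 (th 1 1 ^ 5 * th 4 6 * th 2 8 ^ 3)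
      + tm 16 8 (th 1 1 ^ 5 * th 2 8 ^ 4)
      + tm 3 1 (th 3 7 * th 4 6 ^ 4) + tm 24 3 (th 3 7 * th 4 6 ^ 3 * th 2 8)
      + tm 72 5 (th 3 7 * th 4 6 ^ 2 * th 2 8 ^ 2) + tm 96 7 (th 3 7 * th 4 6 * th 2 8 ^ 3)
      + tm 48 9 (th 3 7 * th 2 8 ^ 4)
      + tm 2 4 (th 1 9 * th 4 6 ^ 4) + tm 16 6 (th 1 9 * th 4 6 ^ 3 * th 2 8)
      + tm 48 8 (th 1 9 * th 4 6 ^ 2 * th 2 8 ^ 2) + tm 64 10 (th 1 9 * th 4 6 * th 2 8 ^ 3)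
      + tm 32 12 (th 1 9 * th 2 8 ^ 4) := by
    rw [h1, f2four]; simp only [tm]; push_cast; ring
  rw [h2] at h3
  simp only [U_add] at h3
  rw [U_tm' 4 1 0 _ (by norm_num) (by norm_num), U_tm' 4 8 2 _ (by norm_num) (by norm_num),
    U_tm 4 24 4 0 _ (by norm_num) (by norm_num), U_tm' 4 32 6 _ (by norm_num) (by norm_num),
    U_tm' 4 16 8 _ (by norm_num) (by norm_num), U_tm' 4 3 1 _ (by norm_num) (by norm_num),
    U_tm' 4 24 3 _ (by norm_num) (by norm_num), U_tm' 4 72 5 _ (by norm_num) (by norm_num),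
    U_tm' 4 96 7 _ (by norm_num) (by norm_num), U_tm 4 48 9 1 _ (by norm_num) (by norm_num),
    U_tm 4 2 4 0 _ (by norm_num) (by norm_num), U_tm' 4 16 6 _ (by norm_num) (by norm_num),
    U_tm' 4 48 8 _ (by norm_num) (by norm_num), U_tm' 4 64 10 _ (by norm_num) (by norm_num),
    U_tm' 4 32 12 _ (by norm_num) (by norm_num)] at h3
  push_cast at h3
  linear_combination -h3

theorem stau : pr 1 1 ^ 6 * ((th 3 7 * th 4 6 + 2 * X * th 1 9 * th 2 8) * (th 4 6 ^ 5 - 2 * X ^ 2 * th 2 8 ^ 5))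
    = pr 1 1 ^ 8 * pr 2 2 ^ 5 + 2 * X * pr 2 2 ^ 21 + 2 * X * pr 1 1 ^ 16 * pr 2 2 ^ 13 := by
  set s := th 3 7 * th 4 6 + 2 * X * th 1 9 * th 2 8 with hs
  set τ := th 4 6 ^ 5 - 2 * X ^ 2 * th 2 8 ^ 5 with hτ
  have s2 : pr 1 1 ^ 4 * s ^ 2 = pr 1 1 ^ 8 * pr 2 2 ^ 4 + 8 * X * pr 2 2 ^ 20 := by
    have : s ^ 2 = (pr 1 1 ^ 2 * pr 2 2 ^ 2) ^ 2 + 8 * X * (th 3 7 * th 1 9) * (th 4 6 * th 2 8) := by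
      rw [← EqW', hs]; ring
    rw [F4b] at this
    rw [this]; linear_combination 8 * X * pr 2 2 ^ 6 * F4e
  have t2 : τ ^ 2 = pr 2 2 ^ 6 - 8 * X ^ 2 * pr 2 2 ^ 30 := by
    have e6 : pr 2 2 ^ 6 = (th 4 6 ^ 5 + 2 * X ^ 2 * th 2 8 ^ 5) ^ 2 := by rw [← F3b]; ring
    have e30 : pr 2 2 ^ 30 = (th 4 6 * th 2 8) ^ 5 := by rw [F4b]; ring
    rw [e6, e30, hτ]; ring
  set M := pr 1 1 ^ 8 * pr 2 2 ^ 5 + 2 * X * pr 2 2 ^ 21 + 2 * X * pr 1 1 ^ 16 * pr 2 2 ^ 13 with hM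
  have sq : (pr 1 1 ^ 6 * (s * τ)) ^ 2 = M ^ 2 := by
    have e1 : (pr 1 1 ^ 6 * (s * τ)) ^ 2 = pr 1 1 ^ 8 * (pr 1 1 ^ 8 * pr 2 2 ^ 4 + 8 * X * pr 2 2 ^ 20) *
        (pr 2 2 ^ 6 - 8 * X ^ 2 * pr 2 2 ^ 30) := by rw [← s2, ← t2]; ring
    rw [e1, hM]
    linear_combination (-(pr 2 2 ^ 10) * (4 * X * pr 2 2 ^ 8 + 4 * X ^ 2 * pr 1 1 ^ 8 * pr 2 2 ^ 16)) * EqR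
      - pr 2 2 ^ 10 * (4 * X ^ 2 * pr 1 1 ^ 16 * pr 2 2 ^ 24 + 12 * X ^ 3 * pr 1 1 ^ 8 * pr 2 2 ^ 40) * h5ps
  have hc : constantCoeff (pr 1 1 ^ 6 * (s * τ)) = 1 := by
    simp [hs, hτ, th_const, pr_const]
  have hc' : constantCoeff M = 1 := by
    simp [hM, pr_const]
  rcases sq_eq_sq_iff_eq_or_eq_neg.mp sq with h | h
  · exact h
  · exfalso
    have := congrArg constantCoeff h
    rw [map_neg, hc, hc'] at this
    revert this; decide

theorem step2 : pr 1 1 ^ 6 * U 4 (th 1 1 * pr 2 2 ^ 2) = pr 2 2 ^ 13 := by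
  set Z := U 4 (th 1 1 * pr 2 2 ^ 2) with hZ
  have h := step2a
  rw [← hZ] at h
  have hst := stau
  have h5 : th 1 1 ^ 5 * pr 2 2 ^ 5 = pr 1 1 ^ 10 := by rw [← mul_pow, F1]; ring
  have e1 : X * pr 2 2 ^ 8 * Z = 24 * X * th 1 1 ^ 5 * pr 2 2 ^ 18 +
      2 * (pr 1 1 ^ 2 * pr 2 2 ^ 5 - (th 3 7 * th 4 6 + 2 * X * th 1 9 * th 2 8)
        * (th 4 6 ^ 5 - 2 * X ^ 2 * th 2 8 ^ 5)) := by
    have a1 : pr 1 1 ^ 2 * pr 2 2 ^ 5 = (th 3 7 * th 4 6 - 2 * X * th 1 9 * th 2 8) *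
      (th 4 6 ^ 5 + 2 * X ^ 2 * th 2 8 ^ 5) := by rw [← F3b, EqW']; ring
    have a2 : X * pr 2 2 ^ 8 * Z = X * (th 4 6 * th 2 8) * (pr 2 2 ^ 2 * Z) := by rw [F4b]; ring
    have a3 : 24 * X * th 1 1 ^ 5 * pr 2 2 ^ 18 = 24 * X * th 1 1 ^ 5 * (th 4 6 * th 2 8) ^ 3 := by
      rw [F4b]; ring
    rw [a1, a2, a3, h]
    linear_combination (8 * X ^ 2 * th 4 6 * th 3 7 * th 2 8 ^ 5 + 2 * X * th 4 6 ^ 5 * th 2 8 * th 1 9) * h5ps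
  have hX : (X : K⟦X⟧) ≠ 0 := X_ne_zero
  apply mul_left_cancel₀ hX
  apply mul_left_cancel₀ (pow_ne_zero 8 hf2)
  linear_combination pr 1 1 ^ 6 * e1 - 2 * hst + 24 * X * pr 1 1 ^ 6 * pr 2 2 ^ 13 * h5 + (4 * X * pr 1 1 ^ 16 * pr 2 2 ^ 13 - X * pr 2 2 ^ 21) * h5ps

theorem step3 : U 0 (th 1 1 * U 4 (th 1 1 * pr 2 2 ^ 2)) = th 1 1 ^ 6 * pr 2 2 ^ 2 := by
  have hz := step2
  set Z := U 4 (th 1 1 * pr 2 2 ^ 2) with hZ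
  set D := th 2 3 * th 4 6 ^ 2 - 2 * X * th 1 4 * th 2 8 ^ 2 with hD
  have hD' : pr 2 2 ^ 2 * D = pr 1 1 ^ 7 := by
    apply mul_left_cancel₀ (pow_ne_zero 8 hf2)
    linear_combination (th 4 6 ^ 2 * F4c - 2 * X * th 2 8 ^ 2 * F4d) +
      (th 3 7 * th 4 6 - 2 * X * th 1 9 * th 2 8) * pr 1 1 ^ 5 * F4b + pr 2 2 ^ 6 * pr 1 1 ^ 5 * EqW'
  have e1 : pr 1 1 ^ 5 * (th 1 1 * Z) = (pr 2 2 ^ 2) ^ 5 * (pr 1 1 * pr 2 2 ^ 2) := by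
    apply mul_left_cancel₀ hf1
    apply mul_left_cancel₀ hf2
    linear_combination pr 1 1 ^ 6 * Z * F1 + pr 1 1 ^ 2 * hz
  have e2 := congrArg (U 0) e1
  rw [U_pow_mul _ _ _ (by norm_num), U_pow_mul _ _ _ (by norm_num)] at e2
  have h3 := U_pow_mul 0 (pr 1 1 * pr 2 2 ^ 2) (pr 1 1 * pr 2 2 ^ 2) (by norm_num)
  have h2 : (pr 1 1 * pr 2 2 ^ 2) ^ 5 * (pr 1 1 * pr 2 2 ^ 2) =
      tm 1 0 (th 2 3 ^ 2 * th 4 6 ^ 4) + tm 8 2 (th 2 3 ^ 2 * th 4 6 ^ 3 * th 2 8)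
      + tm 24 4 (th 2 3 ^ 2 * th 4 6 ^ 2 * th 2 8 ^ 2) + tm 32 6 (th 2 3 ^ 2 * th 4 6 * th 2 8 ^ 3)
      + tm 16 8 (th 2 3 ^ 2 * th 2 8 ^ 4)
      + tm 4 1 (th 2 3 * th 1 4 * th 4 6 ^ 4) + tm 32 3 (th 2 3 * th 1 4 * th 4 6 ^ 3 * th 2 8)
      + tm 96 5 (th 2 3 * th 1 4 * th 4 6 ^ 2 * th 2 8 ^ 2) + tm 128 7 (th 2 3 * th 1 4 * th 4 6 * th 2 8 ^ 3)
      + tm 64 9 (th 2 3 * th 1 4 * th 2 8 ^ 4)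
      + tm 4 2 (th 1 4 ^ 2 * th 4 6 ^ 4) + tm 32 4 (th 1 4 ^ 2 * th 4 6 ^ 3 * th 2 8)
      + tm 96 6 (th 1 4 ^ 2 * th 4 6 ^ 2 * th 2 8 ^ 2) + tm 128 8 (th 1 4 ^ 2 * th 4 6 * th 2 8 ^ 3)
      + tm 64 10 (th 1 4 ^ 2 * th 2 8 ^ 4) := by
    have : (pr 1 1 * pr 2 2 ^ 2) ^ 5 * (pr 1 1 * pr 2 2 ^ 2) = (pr 1 1 ^ 3) ^ 2 * pr 2 2 ^ 12 := by ring
    rw [this, f2four, F3a]; simp only [tm]; push_cast; ring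
  rw [h2] at h3
  simp only [U_add] at h3
  rw [U_tm 0 1 0 0 _ (by norm_num) (by norm_num), U_tm' 0 8 2 _ (by norm_num) (by norm_num),
    U_tm' 0 24 4 _ (by norm_num) (by norm_num), U_tm' 0 32 6 _ (by norm_num) (by norm_num),
    U_tm' 0 16 8 _ (by norm_num) (by norm_num), U_tm' 0 4 1 _ (by norm_num) (by norm_num),
    U_tm' 0 32 3 _ (by norm_num) (by norm_num), U_tm 0 96 5 1 _ (by norm_num) (by norm_num),
    U_tm' 0 128 7 _ (by norm_num) (by norm_num), U_tm' 0 64 9 _ (by norm_num) (by norm_num),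
    U_tm' 0 4 2 _ (by norm_num) (by norm_num), U_tm' 0 32 4 _ (by norm_num) (by norm_num),
    U_tm' 0 96 6 _ (by norm_num) (by norm_num), U_tm' 0 128 8 _ (by norm_num) (by norm_num),
    U_tm 0 64 10 2 _ (by norm_num) (by norm_num)] at h3
  push_cast at h3
  have h4 : pr 1 1 * pr 2 2 ^ 2 * U 0 (pr 1 1 * pr 2 2 ^ 2) = D ^ 2 := by
    rw [hD]
    linear_combination -h3 + (20 * X * th 2 3 * th 1 4 * th 4 6 ^ 2 * th 2 8 ^ 2
      + 12 * X ^ 2 * th 1 4 ^ 2 * th 2 8 ^ 4) * h5ps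
  have h12 : th 1 1 ^ 6 * pr 2 2 ^ 6 = pr 1 1 ^ 12 := by rw [← mul_pow, F1]; ring
  apply mul_left_cancel₀ (pow_ne_zero 4 hf2)
  apply mul_left_cancel₀ (pow_ne_zero 2 hf1)
  linear_combination pr 1 1 * pr 2 2 ^ 4 * e2 + pr 2 2 ^ 4 * h4 + (pr 2 2 ^ 2 * D + pr 1 1 ^ 7) * hD' - pr 1 1 ^ 2 * h12

theorem main_ps (B0 : K⟦X⟧) (h : B0 * pr 2 2 ^ 4 = pr 1 1 ^ 4) : U 0 (U 4 (U 1 B0)) = U 1 B0 := by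
  rw [step1 B0 h]
  have : th 1 1 ^ 6 * pr 2 2 ^ 2 = th 1 1 ^ 5 * (th 1 1 * pr 2 2 ^ 2) := by ring
  rw [this, U_pow_mul _ _ _ (by norm_num), step3, ← this]


end

section


/-- The factors of the generating function. -/
noncomputable def gg (i : ℕ) : K⟦X⟧ := 1 + (if 5 ∣ (i + 1) then 0 else X ^ (i + 1))

/-- The weights of the generating function. -/
def ff (i c : ℕ) : K := if c = 1 ∧ ¬ (5 ∣ i) then 1 else 0

theorem good_gg : Good gg := by
  intro i
  unfold Cg gg
  split_ifs
  · simp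
  · rw [add_sub_cancel_left]; exact pow_dvd_pow _ (by omega)

theorem good_P : Good (fun i => (1 + X ^ (i + 1) : K⟦X⟧)) := by
  intro i
  unfold Cg
  rw [add_sub_cancel_left]; exact pow_dvd_pow _ (by omega)

theorem coeff_gen (n : ℕ) : coeff n (Nat.Partition.genFun ff) = (b5' n : K) := by
  rw [Nat.Partition.coeff_genFun, b5', Finset.card_filter, Nat.Partition.distincts, Finset.sum_filter]
  push_cast
  apply Finset.sum_congr rfl
  intro p _
  unfold Finsupp.prod ff
  rw [Finset.prod_boole]
  have hq : (∀ i ∈ (Multiset.toFinsupp p.parts).support, (Multiset.toFinsupp p.parts) i = 1 ∧ ¬ 5 ∣ i) ↔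
      ∀ i ∈ p.parts, Multiset.count i p.parts = 1 ∧ ¬ 5 ∣ i := by simp
  rw [if_congr hq rfl rfl]
  by_cases h : p.parts.Nodup
  · rw [if_pos h]
    congr 1
    apply propext
    constructor
    · intro h' i hi; exact (h' i hi).2
    · intro h' i hi; exact ⟨Multiset.count_eq_one_of_mem h hi, h' i hi⟩
  · rw [if_neg h, if_neg]
    intro h'
    apply h
    rw [Multiset.nodup_iff_count_eq_one]
    intro i hi
    exact (h' i hi).1

open scoped PowerSeries.WithPiTopology in
theorem gen_eq_IP : Nat.Partition.genFun ff = IP gg := by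
  let _ : TopologicalSpace K := ⊥
  have _ : DiscreteTopology K := ⟨rfl⟩
  have h := Nat.Partition.hasProd_genFun ff
  have e : (fun i => (1 : K⟦X⟧) + ∑' j, ff (i + 1) (j + 1) • X ^ ((i + 1) * (j + 1))) = gg := by
    funext i
    rw [tsum_eq_single 0]
    · unfold gg ff
      congr 1
      by_cases h5 : 5 ∣ i + 1 <;> simp [h5]
    · intro j hj
      simp [ff, hj]
  rw [e] at h
  have h' := h.tendsto_prod_nat
  rw [WithPiTopology.tendsto_iff_coeff_tendsto] at h'
  ext n
  refine tendsto_nhds_unique (h' n) ?_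
  apply tendsto_const_nhds.congr'
  filter_upwards [Filter.eventually_ge_atTop (n + 1)] with N hN
  exact (IP_Cg good_gg hN).coeff (by omega)

theorem P_split : IP (fun i => (1 + X ^ (i + 1) : K⟦X⟧)) = IP gg * IP (fun i => (1 + X ^ (i + 1) : K⟦X⟧)) ^ 5 := by
  have h1 := IP_split good_P (m := 5) (by norm_num)
  have h2 := IP_split good_gg (m := 5) (by norm_num)
  have h3 := IP_pow good_P 5
  simp only [Finset.prod_range_succ, Finset.prod_range_zero] at h1 h2
  have h4 : IP (fun i => gg (5 * i + 4)) = 1 := by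
    rw [← IP_one]; congr 1; funext i
    unfold gg; rw [if_pos (by omega), add_zero]
  have h5 : ∀ r < 4, (fun i => gg (5 * i + r)) = (fun i => (1 + X ^ (5 * i + r + 1) : K⟦X⟧)) := by
    intro r hr; funext i; unfold gg; rw [if_neg (by omega)]
  rw [h4, h5 0 (by norm_num), h5 1 (by norm_num), h5 2 (by norm_num), h5 3 (by norm_num)] at h2
  have h6 : IP (fun i => (1 + X ^ (5 * i + 4 + 1) : K⟦X⟧)) = IP (fun i => (1 + X ^ (i + 1) : K⟦X⟧)) ^ 5 := by
    rw [h3]; congr 1; funext i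
    rw [add_pow_char, one_pow, ← pow_mul]; congr 2; ring
  rw [h6] at h1
  rw [h2]
  linear_combination h1

theorem P_f1 : IP (fun i => (1 + X ^ (i + 1) : K⟦X⟧)) * pr 1 1 = pr 2 2 := by
  rw [pr, pr, IP_mul good_P (good_factor' 1 (by norm_num))]
  congr 1; funext i; ring

theorem gen_rel : Nat.Partition.genFun ff * pr 2 2 ^ 4 = pr 1 1 ^ 4 := by
  rw [gen_eq_IP]
  apply mul_right_cancel₀ hf2
  have h1 := P_split
  have h2 := P_f1
  generalize IP (fun i => (1 + X ^ (i + 1) : K⟦X⟧)) = P at h1 h2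
  rw [← h2]
  linear_combination (-(pr 1 1 ^ 5)) * h1

theorem final (n : ℕ) : b5' (125 * n + 21) ≡ b5' (5 * n + 1) [MOD 5] := by
  have h := congrArg (coeff n) (main_ps _ gen_rel)
  rw [coeff_U, coeff_U, coeff_U, coeff_U, coeff_gen, coeff_gen,
    show 5 * (5 * (5 * n + 0) + 4) + 1 = 125 * n + 21 by ring] at h
  exact (ZMod.natCast_eq_natCast_iff _ _ _).mp h


end

end B5

theorem b5'_125n21_mod5 (n : ℕ) : b5' (125 * n + 21) ≡ b5' (5 * n + 1) [MOD 5] := by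
  exact B5.final n
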